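/- arXiv:2506.11872 — 7 statements merged into one kernel-verified Lean document; each statement's English description precedes it below -/
import Mathlib

section
/- Let X be a real Banach space and let (C_n)_{n∈ℕ} be a sequence of non-empty subsets of X. Then the following are equivalent: (i) the series ∑_n C_n is unconditionally convergent (i.e., for every choice of x_n ∈ C_n the series ∑_n x_n is unconditionally convergent in X); (ii) for every ε > 0 there exists N_ε ∈ ℕ such that sup{‖x‖ : x ∈ ∑_{n∈P} C_n} ≤ ε for every finite non-empty set P ⊆ ℕ \ {1,…,N_ε}. -/
/-!
The condition on tails is the Cauchy criterion for summability, uniform over all selections, so it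
gives summability of each selection by completeness. Conversely, if it fails for some `ε`, then there
are successive, hence pairwise disjoint, finite blocks `P (N 0), P (N 1), …` and on each of them a
partial selection whose sum has norm `> ε`. Gluing these partial selections gives one selection of
`C` that violates the Cauchy criterion, so it is not summable.
-/

/-- The series of sets `∑ₙ Cₙ` is unconditionally convergent: every selection is
(unconditionally) summable. In a Banach space, `Summable` (convergence of the net of
finite partial sums) is equivalent to unconditional convergence. -/
def UncondConvSeriesOfSets {X : Type*} [NormedAddCommGroup X] (C : ℕ → Set X) : Prop :=
  ∀ x : ℕ → X, (∀ n, x n ∈ C n) → Summable x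

/-- Let `X` be a real Banach space and `(Cₙ)` a sequence of non-empty
subsets of `X`. The series `∑ₙ Cₙ` is unconditionally convergent iff for every `ε > 0`
there is `N` such that `‖∑_{n ∈ P} Cₙ‖ ≤ ε` for every finite non-empty
`P ⊆ ℕ \ {0, …, N}`, i.e. every element of the set `∑_{n ∈ P} Cₙ` has norm `≤ ε`. -/
theorem statement0 {X : Type*} [NormedAddCommGroup X] [NormedSpace ℝ X] [CompleteSpace X]
    (C : ℕ → Set X) (hne : ∀ n, (C n).Nonempty) :
    UncondConvSeriesOfSets C ↔
      ∀ ε : ℝ, 0 < ε → ∃ N : ℕ, ∀ P : Finset ℕ, P.Nonempty → (∀ n ∈ P, N < n) →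
        ∀ x : ℕ → X, (∀ n ∈ P, x n ∈ C n) → ‖∑ n ∈ P, x n‖ ≤ ε := by
  classical
  constructor
  · intro hC
    by_contra! hcon
    obtain ⟨ε, hε, h⟩ := hcon
    choose P hPne hP x hx hbig using h
    -- `N k` is the threshold beyond which the `k`-th block `P (N k)` is taken; the next threshold
    -- is the maximum of that block.
    let N : ℕ → ℕ := fun k => Nat.rec 0 (fun _ m => (P m).sup id) k
    have hle : ∀ k, ∀ n ∈ P (N k), n ≤ N (k + 1) := fun k n hn =>
      Finset.le_sup (f := id) hn
    have hmono : StrictMono N := strictMono_nat_of_lt_succ fun k => by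
      obtain ⟨n, hn⟩ := hPne (N k)
      exact (hP _ n hn).trans_le (hle k n hn)
    have hlt : ∀ j k n, n ∈ P (N j) → n ∈ P (N k) → ¬ j < k := fun j k n hj hk hjk =>
      absurd ((hle j n hj).trans (hmono.monotone hjk)) (not_le.2 (hP _ n hk))
    have huniq : ∀ j k n, n ∈ P (N j) → n ∈ P (N k) → j = k := fun j k n hj hk =>
      le_antisymm (not_lt.1 (hlt k j n hk hj)) (not_lt.1 (hlt j k n hj hk))
    choose c hc using hne
    let y : ℕ → X := fun n => if h : ∃ k, n ∈ P (N k) then x (N h.choose) n else c n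
    have hyC : ∀ n, y n ∈ C n := by
      intro n
      by_cases h : ∃ k, n ∈ P (N k)
      · simp only [y, dif_pos h]
        exact hx _ n h.choose_spec
      · simp only [y, dif_neg h]
        exact hc n
    have hyx : ∀ k, ∀ n ∈ P (N k), y n = x (N k) n := by
      intro k n hn
      have h : ∃ k, n ∈ P (N k) := ⟨k, hn⟩
      simp only [y, dif_pos h, huniq _ k n h.choose_spec hn]
    obtain ⟨s, hs⟩ := summable_iff_vanishing_norm.1 (hC y hyC) ε hε
    have hdisj : Disjoint (P (N (s.sup id))) s := Finset.disjoint_left.2 fun n hn hns =>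
      absurd ((Finset.le_sup (f := id) hns).trans hmono.le_apply) (not_le.2 (hP _ n hn))
    have hsmall := hs _ hdisj
    rw [Finset.sum_congr rfl (hyx _)] at hsmall
    exact absurd hsmall (hbig _).not_gt
  · intro h x hx
    refine summable_iff_vanishing_norm.2 fun ε hε => ?_
    obtain ⟨N, hN⟩ := h (ε / 2) (half_pos hε)
    refine ⟨Finset.range (N + 1), fun t ht => ?_⟩
    rcases t.eq_empty_or_nonempty with rfl | ht_ne
    · simpa using hε
    · refine (hN t ht_ne (fun n hn => ?_) x fun n _ => hx n).trans_lt (half_lt_self hε)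
      have := Finset.disjoint_left.1 ht hn
      rw [Finset.mem_range] at this
      omega
end

section
/- Let X be a real Banach space and let (C_n)_{n∈ℕ} be a sequence of bounded non-empty subsets of X such that the series ∑_n C_n is unconditionally convergent. Then the sum set ∑_n C_n is bounded and, for each continuous linear functional x* ∈ X*, the series ∑_n s(x*, C_n) is absolutely convergent with sum s(x*, ∑_n C_n). -/
/-- The sum of the series of sets `∑ₙ Cₙ`: the set of all sums of selections. -/
def seriesSumSet {X : Type*} [NormedAddCommGroup X] (C : ℕ → Set X) : Set X :=
  {s | ∃ x : ℕ → X, (∀ n, x n ∈ C n) ∧ HasSum x s}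

/-- The support functional `s(x*, C) = sup x*(C)`. -/
noncomputable def supportFn {X : Type*} [NormedAddCommGroup X] [NormedSpace ℝ X]
    (f : X →L[ℝ] ℝ) (C : Set X) : ℝ := sSup (f '' C)

theorem isLUB_supportFn {X : Type*} [NormedAddCommGroup X] [NormedSpace ℝ X]
    {C : Set X} (hne : C.Nonempty) (hbd : Bornology.IsBounded C) (f : X →L[ℝ] ℝ) :
    IsLUB (f '' C) (supportFn f C) :=
  isLUB_csSup (hne.image f) (f.lipschitz.isBounded_image hbd).bddAbove

/-- A selection that is `ε / 2 / 2 ^ n`-optimal for `f` in the `n`-th set witnesses that the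
series of suprema is summable and is nearly attained on the sum set. -/
theorem exists_near_optimal {X : Type*} [NormedAddCommGroup X] [NormedSpace ℝ X]
    {C : ℕ → Set X} (hne : ∀ n, (C n).Nonempty) (hbd : ∀ n, Bornology.IsBounded (C n))
    (huc : UncondConvSeriesOfSets C) (f : X →L[ℝ] ℝ) {ε : ℝ} (hε : 0 < ε) :
    Summable (fun n => supportFn f (C n)) ∧
      ∃ s ∈ seriesSumSet C, ∑' n, supportFn f (C n) ≤ f s + ε := by
  have hex : ∀ n, ∃ x ∈ C n, supportFn f (C n) - ε / 2 / 2 ^ n < f x := by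
    intro n
    have hpos : (0 : ℝ) < ε / 2 / 2 ^ n := by positivity
    obtain ⟨_, ⟨x, hx, rfl⟩, hlt, -⟩ :=
      (isLUB_supportFn (hne n) (hbd n) f).exists_between (sub_lt_self _ hpos)
    exact ⟨x, hx, hlt⟩
  choose x hxC hx using hex
  have hxs : HasSum x (∑' n, x n) := (huc x hxC).hasSum
  have hfx : HasSum (fun n => f (x n)) (f (∑' n, x n)) := f.hasSum hxs
  have hgeom : HasSum (fun n : ℕ => ε / 2 / 2 ^ n) ε := hasSum_geometric_two' ε
  have hdiff : Summable (fun n => supportFn f (C n) - f (x n)) :=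
    hgeom.summable.of_nonneg_of_le
      (fun n => sub_nonneg.2
        ((isLUB_supportFn (hne n) (hbd n) f).1 (Set.mem_image_of_mem f (hxC n))))
      (fun n => by linarith [hx n])
  have hsum : Summable (fun n => supportFn f (C n)) := by
    simpa using hdiff.add hfx.summable
  refine ⟨hsum, _, ⟨x, hxC, hxs⟩, ?_⟩
  exact hasSum_le (fun n => by linarith [hx n]) hsum.hasSum (hfx.add hgeom)

theorem isLUB_image_seriesSumSet {X : Type*} [NormedAddCommGroup X] [NormedSpace ℝ X]
    {C : ℕ → Set X} (hne : ∀ n, (C n).Nonempty) (hbd : ∀ n, Bornology.IsBounded (C n))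
    (huc : UncondConvSeriesOfSets C) (f : X →L[ℝ] ℝ) :
    IsLUB (f '' seriesSumSet C) (∑' n, supportFn f (C n)) := by
  constructor
  · rintro _ ⟨s, ⟨y, hy, hs⟩, rfl⟩
    exact hasSum_le
      (fun n => (isLUB_supportFn (hne n) (hbd n) f).1 (Set.mem_image_of_mem f (hy n)))
      (f.hasSum hs) (exists_near_optimal hne hbd huc f one_pos).1.hasSum
  · intro b hb
    refine le_of_forall_pos_le_add fun ε hε => ?_
    obtain ⟨s, hs, hle⟩ := (exists_near_optimal hne hbd huc f hε).2
    linarith [hb (Set.mem_image_of_mem f hs)]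

/-- Weakly bounded sets are bounded: the uniform boundedness principle applied to the set viewed
in the double dual. A one-sided bound for every `f` suffices, since `-f` gives the other side. -/
theorem isBounded_of_bddAbove_image {X : Type*} [NormedAddCommGroup X] [NormedSpace ℝ X]
    {S : Set X} (h : ∀ f : X →L[ℝ] ℝ, BddAbove (f '' S)) : Bornology.IsBounded S := by
  obtain ⟨K, hK⟩ := banach_steinhaus
    (g := fun s : S => NormedSpace.inclusionInDoubleDual ℝ X (s : X)) (fun f => by
      obtain ⟨a, ha⟩ := h f
      obtain ⟨b, hb⟩ := h (-f)
      refine ⟨max a b, fun s => ?_⟩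
      have h1 : f s ≤ a := ha (Set.mem_image_of_mem f s.2)
      have h2 : -f s ≤ b := hb (Set.mem_image_of_mem (-f) s.2)
      exact abs_le'.2 ⟨h1.trans (le_max_left _ _), h2.trans (le_max_right _ _)⟩)
  refine isBounded_iff_forall_norm_le.2 ⟨K, fun s hs => ?_⟩
  have := hK ⟨s, hs⟩
  rwa [show ‖NormedSpace.inclusionInDoubleDual ℝ X s‖ = ‖s‖ from
    (NormedSpace.inclusionInDoubleDualLi ℝ).norm_map s] at this

/-- If `(Cₙ)` is a sequence of bounded non-empty subsets of a Banach
space `X` whose series is unconditionally convergent, then the sum set `∑ₙ Cₙ` is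
bounded and, for each `x* ∈ X*`, the series `∑ₙ s(x*, Cₙ)` is absolutely convergent
with sum `s(x*, ∑ₙ Cₙ)`. -/
theorem statement1 {X : Type*} [NormedAddCommGroup X] [NormedSpace ℝ X] [CompleteSpace X]
    (C : ℕ → Set X) (hne : ∀ n, (C n).Nonempty) (hbd : ∀ n, Bornology.IsBounded (C n))
    (huc : UncondConvSeriesOfSets C) :
    Bornology.IsBounded (seriesSumSet C) ∧
      ∀ f : X →L[ℝ] ℝ, Summable (fun n => |supportFn f (C n)|) ∧
        (∑' n, supportFn f (C n)) = supportFn f (seriesSumSet C) := by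
  refine ⟨isBounded_of_bddAbove_image fun f => (isLUB_image_seriesSumSet hne hbd huc f).bddAbove,
    fun f => ⟨(exists_near_optimal hne hbd huc f one_pos).1.abs, ?_⟩⟩
  have hS : (seriesSumSet C).Nonempty :=
    let ⟨s, hs, _⟩ := (exists_near_optimal hne hbd huc f one_pos).2
    ⟨s, hs⟩
  exact ((isLUB_image_seriesSumSet hne hbd huc f).csSup_eq (hS.image f)).symm
end

section
/- Let X be a real Banach space and let Y ⊆ X* be a total set. Let (C_n)_{n∈ℕ} be a sequence of non-empty subsets of X, each of which is compact in the topology σ(X,Y). If the series ∑_n C_n is unconditionally convergent, then its sum set ∑_n C_n is σ(X,Y)-compact. -/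
/-- The topology `σ(X, Y)` of pointwise convergence on a set `Y ⊆ X*`. -/
def sigmaTop {X : Type*} [NormedAddCommGroup X] [NormedSpace ℝ X]
    (Y : Set (X →L[ℝ] ℝ)) : TopologicalSpace X :=
  TopologicalSpace.induced (fun x => fun y : Y => (y : X →L[ℝ] ℝ) x) Pi.topologicalSpace

/-- The M-test bound: on `σ(X, Y)`-compact sets forming an unconditionally convergent series, each
`f ∈ Y` is dominated by a summable sequence. -/
lemma exists_summable_bound {X : Type*} [NormedAddCommGroup X] [NormedSpace ℝ X]
    (Y : Set (X →L[ℝ] ℝ)) (C : ℕ → Set X) (hne : ∀ n, (C n).Nonempty)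
    (hK : ∀ n, IsCompact ((fun x => fun y : Y => (y : X →L[ℝ] ℝ) x) '' C n))
    (huc : UncondConvSeriesOfSets C) (f : Y) :
    ∃ M : ℕ → ℝ, Summable M ∧ ∀ n, ∀ x ∈ C n, ‖(f : X →L[ℝ] ℝ) x‖ ≤ M n := by
  have hmax : ∀ n, ∃ x ∈ C n, ∀ x' ∈ C n, ‖(f : X →L[ℝ] ℝ) x'‖ ≤ ‖(f : X →L[ℝ] ℝ) x‖ := by
    intro n
    obtain ⟨_, ⟨x, hx, rfl⟩, hm⟩ := (hK n).exists_isMaxOn ((hne n).image _)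
      (f := fun v : Y → ℝ => ‖v f‖) (continuous_apply f).norm.continuousOn
    exact ⟨x, hx, fun x' hx' => hm (Set.mem_image_of_mem _ hx')⟩
  choose x hxC hx using hmax
  exact ⟨fun n => ‖(f : X →L[ℝ] ℝ) (x n)‖,
    ((huc x hxC).map (f : X →L[ℝ] ℝ) (f : X →L[ℝ] ℝ).continuous).norm, hx⟩

/-- Let `X` be a Banach space, `Y ⊆ X*` total, and `(Cₙ)` a sequence of
non-empty `σ(X,Y)`-compact subsets of `X`. If the series `∑ₙ Cₙ` is unconditionally
convergent then its sum set is `σ(X,Y)`-compact. -/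
theorem statement2 {X : Type*} [NormedAddCommGroup X] [NormedSpace ℝ X] [CompleteSpace X]
    (Y : Set (X →L[ℝ] ℝ)) (hYtotal : ∀ x : X, (∀ f ∈ Y, f x = 0) → x = 0)
    (C : ℕ → Set X) (hne : ∀ n, (C n).Nonempty)
    (hcpt : ∀ n, @IsCompact X (sigmaTop Y) (C n))
    (huc : UncondConvSeriesOfSets C) :
    @IsCompact X (sigmaTop Y) (seriesSumSet C) := by
  let F : X → Y → ℝ := fun x => fun y : Y => (y : X →L[ℝ] ℝ) x
  have hind : @Topology.IsInducing X (Y → ℝ) (sigmaTop Y) _ F :=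
    @Topology.IsInducing.mk _ _ (sigmaTop Y) _ _ rfl
  have hK : ∀ n, IsCompact (F '' C n) := fun n =>
    (@Topology.IsInducing.isCompact_iff _ _ (sigmaTop Y) _ _ _ hind).1 (hcpt n)
  refine (@Topology.IsInducing.isCompact_iff _ _ (sigmaTop Y) _ _ _ hind).2 ?_
  have himage : F '' seriesSumSet C =
      (fun (z : ℕ → Y → ℝ) (f : Y) => ∑' n, z n f) '' Set.univ.pi fun n => F '' C n := by
    ext v
    constructor
    · rintro ⟨s, ⟨x, hxC, hs⟩, rfl⟩
      refine ⟨fun n => F (x n), fun n _ => Set.mem_image_of_mem F (hxC n), ?_⟩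
      funext f
      exact (hs.mapL (f : X →L[ℝ] ℝ)).tsum_eq
    · rintro ⟨z, hz, rfl⟩
      choose x hxC hx using fun n => hz n (Set.mem_univ n)
      have hs := (huc x hxC).hasSum
      refine ⟨_, ⟨x, hxC, hs⟩, ?_⟩
      funext f
      simp only [← hx]
      exact (hs.mapL (f : X →L[ℝ] ℝ)).tsum_eq.symm
  rw [himage]
  refine (isCompact_univ_pi hK).image_of_continuousOn (continuousOn_pi.2 fun f => ?_)
  obtain ⟨M, hM, hbound⟩ := exists_summable_bound Y C hne hK huc f
  refine continuousOn_tsum (fun n => by fun_prop) hM fun n z hz => ?_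
  obtain ⟨x, hxC, hx⟩ := hz n (Set.mem_univ n)
  rw [← hx]
  exact hbound n x hxC
end

section
/- Let X be a real Banach space, let Y ⊆ X* be a total set, and let M : Σ → b(X) be a set-valued map defined on a σ-algebra Σ such that M(A) is σ(X,Y)-compact for every A ∈ Σ. Then the following are equivalent: (i) M is a strong multimeasure; (ii) for every disjoint sequence (A_n)_n in Σ the series ∑_n M(A_n) is unconditionally convergent and M(⋃_n A_n) = ∑_n M(A_n) (equality of sets, without taking closures). -/
/-- `M` is a strong multimeasure: for every disjoint sequence of measurable sets the
series `∑ₙ M(Aₙ)` is unconditionally convergent and the norm closure of `M(⋃ₙ Aₙ)`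
equals the norm closure of `∑ₙ M(Aₙ)`. -/
def IsStrongMultimeasure {Ω X : Type*} [MeasurableSpace Ω] [NormedAddCommGroup X]
    (M : Set Ω → Set X) : Prop :=
  ∀ A : ℕ → Set Ω, (∀ n, MeasurableSet (A n)) → Pairwise (Function.onFun Disjoint A) →
    UncondConvSeriesOfSets (fun n => M (A n)) ∧
    closure (M (⋃ n, A n)) = closure (seriesSumSet fun n => M (A n))

/-- Evaluation at the functionals of `Y`; the topology `sigmaTop Y` is induced by this map. -/
def evalOn {X : Type*} [NormedAddCommGroup X] [NormedSpace ℝ X]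
    (Y : Set (X →L[ℝ] ℝ)) (x : X) : Y → ℝ :=
  fun y => (y : X →L[ℝ] ℝ) x

lemma isClosed_of_isCompact_image {X : Type*} [NormedAddCommGroup X] [NormedSpace ℝ X]
    (Y : Set (X →L[ℝ] ℝ)) (hYtotal : ∀ x : X, (∀ f ∈ Y, f x = 0) → x = 0)
    {S : Set X} (hS : IsCompact (evalOn Y '' S)) : IsClosed S := by
  have hinj : Function.Injective (evalOn Y) := by
    intro a b hab
    refine sub_eq_zero.mp (hYtotal _ fun f hf => ?_)
    have h := congrFun hab ⟨f, hf⟩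
    simp only [evalOn] at h
    rw [map_sub, h, sub_self]
  have hcont : Continuous (evalOn Y) :=
    continuous_pi fun y => (y : X →L[ℝ] ℝ).continuous
  rw [← Set.preimage_image_eq S hinj]
  exact hS.isClosed.preimage hcont

lemma isCompact_image_of_sigmaTop {X : Type*} [NormedAddCommGroup X] [NormedSpace ℝ X]
    (Y : Set (X →L[ℝ] ℝ)) {S : Set X} (hS : @IsCompact X (sigmaTop Y) S) :
    IsCompact (evalOn Y '' S) := by
  let : TopologicalSpace X := sigmaTop Y
  exact IsCompact.image hS continuous_induced_dom

/-- The sum of an unconditionally convergent series of non-empty `σ(X,Y)`-compact sets is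
`σ(X,Y)`-compact. -/
lemma isCompact_image_seriesSumSet {X : Type*} [NormedAddCommGroup X] [NormedSpace ℝ X]
    (Y : Set (X →L[ℝ] ℝ)) (C : ℕ → Set X) (hne : ∀ n, (C n).Nonempty)
    (hC : ∀ n, IsCompact (evalOn Y '' C n)) (hconv : UncondConvSeriesOfSets C) :
    IsCompact (evalOn Y '' seriesSumSet C) := by
  -- Each `C n` carries the trace of `σ(X,Y)`, not of the norm topology.
  let : ∀ n, TopologicalSpace (C n) := fun n =>
    TopologicalSpace.induced (fun x : C n => evalOn Y x) inferInstance
  have hind : ∀ n, Topology.IsInducing (fun x : C n => evalOn Y x) := fun n => ⟨rfl⟩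
  have : ∀ n, CompactSpace (C n) := by
    intro n
    refine ⟨(hind n).isCompact_iff.mpr ?_⟩
    convert hC n using 1
    ext v
    simp
  have hsum : ∀ x : (∀ n, C n), Summable fun n => (x n : X) := fun x =>
    hconv _ fun n => (x n).2
  have hcoord : ∀ (y : Y) (n : ℕ), Continuous fun x : C n => (y : X →L[ℝ] ℝ) (x : X) :=
    fun y n => (continuous_apply y).comp (hind n).continuous
  have hΦ : Continuous fun x : (∀ n, C n) => evalOn Y (∑' n, (x n : X)) := by
    refine continuous_pi fun y => ?_
    have hmax : ∀ n, ∃ z : C n, ∀ x : C n,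
        ‖(y : X →L[ℝ] ℝ) (x : X)‖ ≤ ‖(y : X →L[ℝ] ℝ) (z : X)‖ := by
      intro n
      have := (hne n).to_subtype
      obtain ⟨z, -, hz⟩ := isCompact_univ.exists_isMaxOn (Set.univ_nonempty (α := C n))
        (hcoord y n).norm.continuousOn
      exact ⟨z, fun x => hz (Set.mem_univ x)⟩
    choose z hz using hmax
    have hu : Summable fun n => ‖(y : X →L[ℝ] ℝ) (z n : X)‖ :=
      ((hsum z).map (y : X →L[ℝ] ℝ) (y : X →L[ℝ] ℝ).continuous).norm
    have heq : (fun x : (∀ n, C n) => evalOn Y (∑' n, (x n : X)) y) =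
        fun x => ∑' n, (y : X →L[ℝ] ℝ) (x n : X) :=
      funext fun x => (y : X →L[ℝ] ℝ).map_tsum (hsum x)
    rw [heq]
    exact continuous_tsum (fun n => (hcoord y n).comp (continuous_apply n)) hu
      fun n x => hz n (x n)
  convert isCompact_range hΦ using 1
  ext v
  constructor
  · rintro ⟨s, ⟨x, hx, hs⟩, rfl⟩
    exact ⟨fun n => ⟨x n, hx n⟩, congrArg (evalOn Y) hs.tsum_eq⟩
  · rintro ⟨x, rfl⟩
    exact ⟨_, ⟨fun n => x n, fun n => (x n).2, (hsum x).hasSum⟩, rfl⟩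

/-- Let `X` be a Banach space, `Y ⊆ X*` a total set, and
`M : Σ → b(X)` a set-valued map with `σ(X,Y)`-compact values. Then `M` is a strong
multimeasure iff for every disjoint sequence `(Aₙ)` in `Σ` the series `∑ₙ M(Aₙ)` is
unconditionally convergent and `M(⋃ₙ Aₙ) = ∑ₙ M(Aₙ)` (no closures taken). -/
theorem statement3 {Ω X : Type*} [MeasurableSpace Ω]
    [NormedAddCommGroup X] [NormedSpace ℝ X] [CompleteSpace X]
    (Y : Set (X →L[ℝ] ℝ)) (hYtotal : ∀ x : X, (∀ f ∈ Y, f x = 0) → x = 0)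
    (M : Set Ω → Set X)
    (hne : ∀ A : Set Ω, MeasurableSet A → (M A).Nonempty)
    (hbd : ∀ A : Set Ω, MeasurableSet A → Bornology.IsBounded (M A))
    (hcpt : ∀ A : Set Ω, MeasurableSet A → @IsCompact X (sigmaTop Y) (M A)) :
    IsStrongMultimeasure M ↔
      ∀ A : ℕ → Set Ω, (∀ n, MeasurableSet (A n)) → Pairwise (Function.onFun Disjoint A) →
        UncondConvSeriesOfSets (fun n => M (A n)) ∧
        M (⋃ n, A n) = seriesSumSet (fun n => M (A n)) := by
  constructor
  · intro h A hA hdisj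
    obtain ⟨hconv, hcl⟩ := h A hA hdisj
    refine ⟨hconv, ?_⟩
    have h₁ : IsClosed (M (⋃ n, A n)) := isClosed_of_isCompact_image Y hYtotal
      (isCompact_image_of_sigmaTop Y (hcpt _ (MeasurableSet.iUnion hA)))
    have h₂ : IsClosed (seriesSumSet fun n => M (A n)) :=
      isClosed_of_isCompact_image Y hYtotal
        (isCompact_image_seriesSumSet Y _ (fun n => hne _ (hA n))
          (fun n => isCompact_image_of_sigmaTop Y (hcpt _ (hA n))) hconv)
    rwa [h₁.closure_eq, h₂.closure_eq] at hcl
  · intro h A hA hdisj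
    obtain ⟨hconv, heq⟩ := h A hA hdisj
    exact ⟨hconv, by rw [heq]⟩
end

section
/- Let X be a real Banach space, let Y ⊆ X* be a total linear subspace, and let M : Σ → b(X) be a set-valued map defined on a σ-algebra Σ such that M(A) is convex and σ(X,Y)-compact for every A ∈ Σ, and such that the support map s(x*,M) is finitely additive for every x* ∈ Y. Then M(A ∪ B) = M(A) + M(B) whenever A, B ∈ Σ are disjoint. -/
/-!
The space `X` with `σ(X,Y)` is a Hausdorff locally convex space whose continuous linear functionals
are exactly the elements of `Y`. Both `M (A ∪ B)` and `M A + M B` are convex and `σ(X,Y)`-compact,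
hence `σ(X,Y)`-closed, and their support functionals agree on `Y`, because the support functional
of a sum is the sum of the support functionals. By Hahn-Banach separation a closed convex set is
determined by its support functional (`subset_of_supportFn_le`), so the two sets coincide.
-/

open Pointwise

/-- A set function `μ : Σ → ℝ` is finitely additive. -/
def FinitelyAdditive {Ω : Type*} [MeasurableSpace Ω] (μ : Set Ω → ℝ) : Prop :=
  ∀ A B : Set Ω, MeasurableSet A → MeasurableSet B → Disjoint A B →
    μ (A ∪ B) = μ A + μ B

/-- The evaluation pairing `(x, f) ↦ f x` between `X` and `Y`. The type `WeakBilin (evalPairing Y)`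
is `X` carrying the topology `σ(X,Y)`. -/
def evalPairing {X : Type*} [NormedAddCommGroup X] [NormedSpace ℝ X]
    (Y : Submodule ℝ (X →L[ℝ] ℝ)) : X →ₗ[ℝ] Y →ₗ[ℝ] ℝ :=
  ((ContinuousLinearMap.coeLM ℝ).comp Y.subtype).flip

theorem t2Space_weakBilin {X : Type*} [NormedAddCommGroup X] [NormedSpace ℝ X]
    (Y : Submodule ℝ (X →L[ℝ] ℝ)) (hY : ∀ x : X, (∀ f ∈ Y, f x = 0) → x = 0) :
    T2Space (WeakBilin (evalPairing Y)) := by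
  refine (WeakBilin.isEmbedding (B := evalPairing Y) ?_).t2Space
  rw [injective_iff_map_eq_zero]
  intro x hx
  exact hY x fun f hf => LinearMap.congr_fun hx ⟨f, hf⟩

theorem bddAbove_image_of_isBounded {X : Type*} [NormedAddCommGroup X] [NormedSpace ℝ X]
    {C : Set X} (hC : Bornology.IsBounded C) (f : X →L[ℝ] ℝ) : BddAbove (f '' C) :=
  (f.lipschitz.isBounded_image hC).bddAbove

/-- Strict separation of a point from a closed convex set in the weak topology of a pairing `B`.
The separating functional is weakly continuous, hence of the form `B · y`. -/
theorem exists_weakBilin_separation {E F : Type*} [AddCommGroup E] [Module ℝ E]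
    [AddCommGroup F] [Module ℝ F] (B : E →ₗ[ℝ] F →ₗ[ℝ] ℝ) {K : Set (WeakBilin B)}
    {x : WeakBilin B} (hK : Convex ℝ K) (hcl : IsClosed K) (hx : x ∉ K) :
    ∃ (y : F) (u : ℝ), (∀ a ∈ K, B a y < u) ∧ u < B x y := by
  obtain ⟨g, u, hg, hu⟩ := geometric_hahn_banach_closed_point hK hcl hx
  obtain ⟨y, rfl⟩ := LinearMap.dualEmbedding_surjective B g
  exact ⟨y, u, hg, hu⟩

/-- A nonempty `σ(X,Y)`-closed convex set contains every bounded set whose support it dominates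
on `Y`: a point outside it would be strictly separated from it by an element of `Y`. -/
theorem subset_of_supportFn_le {X : Type*} [NormedAddCommGroup X] [NormedSpace ℝ X]
    (Y : Submodule ℝ (X →L[ℝ] ℝ)) {K L : Set X} (hKne : K.Nonempty) (hKconv : Convex ℝ K)
    (hKcl : @IsClosed X (sigmaTop (Y : Set (X →L[ℝ] ℝ))) K)
    (hL : Bornology.IsBounded L)
    (h : ∀ f ∈ Y, supportFn f L ≤ supportFn f K) : L ⊆ K := by
  intro x hx
  by_contra hxK
  have hsep := exists_weakBilin_separation (E := X) (F := Y) (evalPairing Y) (K := K) (x := x)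
  obtain ⟨f, u, hg, hu⟩ := hsep hKconv hKcl hxK
  have h1 : supportFn (f : X →L[ℝ] ℝ) K ≤ u := by
    refine csSup_le (hKne.image _) ?_
    rintro _ ⟨a, ha, rfl⟩
    exact (hg a ha).le
  have h2 : (f : X →L[ℝ] ℝ) x ≤ supportFn (f : X →L[ℝ] ℝ) L :=
    le_csSup (bddAbove_image_of_isBounded hL _) ⟨x, hx, rfl⟩
  have h3 : u < (f : X →L[ℝ] ℝ) x := hu
  linarith [h f f.2]

theorem supportFn_add {X : Type*} [NormedAddCommGroup X] [NormedSpace ℝ X]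
    {C D : Set X} (hCne : C.Nonempty) (hDne : D.Nonempty) (hC : Bornology.IsBounded C)
    (hD : Bornology.IsBounded D) (f : X →L[ℝ] ℝ) :
    supportFn f (C + D) = supportFn f C + supportFn f D := by
  unfold supportFn
  rw [Set.image_add, csSup_add (hCne.image _) (bddAbove_image_of_isBounded hC f)
    (hDne.image _) (bddAbove_image_of_isBounded hD f)]

/-- Let `X` be a Banach space, `Y ⊆ X*` a total linear subspace, and
`M : Σ → b(X)` a set-valued map whose values are convex and `σ(X,Y)`-compact, such that
`s(x*, M)` is finitely additive for every `x* ∈ Y`. Then `M(A ∪ B) = M(A) + M(B)` for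
disjoint `A, B ∈ Σ`. -/
theorem statement4 {Ω X : Type*} [MeasurableSpace Ω]
    [NormedAddCommGroup X] [NormedSpace ℝ X] [CompleteSpace X]
    (Y : Submodule ℝ (X →L[ℝ] ℝ))
    (hYtotal : ∀ x : X, (∀ f ∈ Y, f x = 0) → x = 0)
    (M : Set Ω → Set X)
    (hne : ∀ A : Set Ω, MeasurableSet A → (M A).Nonempty)
    (hbd : ∀ A : Set Ω, MeasurableSet A → Bornology.IsBounded (M A))
    (hconv : ∀ A : Set Ω, MeasurableSet A → Convex ℝ (M A))
    (hcpt : ∀ A : Set Ω, MeasurableSet A → @IsCompact X (sigmaTop (Y : Set (X →L[ℝ] ℝ))) (M A))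
    (hfa : ∀ f ∈ Y, FinitelyAdditive (fun A => supportFn f (M A))) :
    ∀ A B : Set Ω, MeasurableSet A → MeasurableSet B → Disjoint A B →
      M (A ∪ B) = M A + M B := by
  intro A B hA hB hAB
  have hU := hA.union hB
  have hT2 := t2Space_weakBilin Y hYtotal
  have hsum : @IsCompact X (sigmaTop (Y : Set (X →L[ℝ] ℝ))) (M A + M B) :=
    IsCompact.add (N := WeakBilin (evalPairing Y)) (hcpt A hA) (hcpt B hB)
  have hsupp : ∀ f ∈ Y, supportFn f (M (A ∪ B)) = supportFn f (M A + M B) := fun f hf => by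
    rw [supportFn_add (hne A hA) (hne B hB) (hbd A hA) (hbd B hB)]
    exact hfa f hf A B hA hB hAB
  apply Set.Subset.antisymm
  · exact subset_of_supportFn_le Y ((hne A hA).add (hne B hB)) ((hconv A hA).add (hconv B hB))
      (IsCompact.isClosed (X := WeakBilin (evalPairing Y)) hsum) (hbd _ hU)
      fun f hf => (hsupp f hf).le
  · exact subset_of_supportFn_le Y (hne _ hU) (hconv _ hU)
      (IsCompact.isClosed (X := WeakBilin (evalPairing Y)) (hcpt _ hU))
      ((hbd A hA).add (hbd B hB)) fun f hf => (hsupp f hf).ge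
end

section
/- Let X be a real Banach space containing no subspace isomorphic to ℓ∞ and let M : Σ → b(X) be a set-valued map defined on a σ-algebra Σ. Suppose there is a total linear subspace Y ⊆ X* such that: (i) M(A) is convex and σ(X,Y)-compact for every A ∈ Σ; and (ii) the support map s(x*,M) is countably additive for every x* ∈ Y. Then M is a strong multimeasure. -/
/-- A set function on a σ-algebra, with values in a topological abelian monoid, is
countably additive. -/
def CountablyAdditive {Ω E : Type*} [MeasurableSpace Ω] [AddCommMonoid E]
    [TopologicalSpace E] (ν : Set Ω → E) : Prop :=
  ∀ A : ℕ → Set Ω, (∀ n, MeasurableSet (A n)) → Pairwise (Function.onFun Disjoint A) →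
    HasSum (fun n => ν (A n)) (ν (⋃ n, A n))

/-- `X` contains a subspace isomorphic to `ℓ∞`: there is a bounded linear map from
`ℓ∞ = lp (fun _ : ℕ => ℝ) ∞` into `X` which is bounded below (hence an isomorphism onto
its closed image). -/
def ContainsIsoCopyOfLinfty (X : Type*) [NormedAddCommGroup X] [NormedSpace ℝ X] : Prop :=
  ∃ T : lp (fun _ : ℕ => ℝ) ⊤ →L[ℝ] X, ∃ c : ℝ, 0 < c ∧
    ∀ u : lp (fun _ : ℕ => ℝ) ⊤, c * ‖u‖ ≤ ‖T u‖

/-! ### The space `ℓ∞` and variations of functionals on it -/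

/-- The Banach space `ℓ∞` of bounded real sequences. -/
abbrev Linf : Type := lp (fun _ : ℕ => ℝ) ⊤

theorem Linf.abs_apply_le (u : Linf) (n : ℕ) : |u n| ≤ ‖u‖ :=
  lp.norm_apply_le_norm ENNReal.top_ne_zero u n

theorem Linf.norm_le (u : Linf) {C : ℝ} (hC : 0 ≤ C) (h : ∀ n, |u n| ≤ C) : ‖u‖ ≤ C :=
  lp.norm_le_of_forall_le hC h

/-- The element of `ℓ∞` given by a sequence bounded by `C`. -/
def Linf.mk (v : ℕ → ℝ) (C : ℝ) (h : ∀ n, |v n| ≤ C) : Linf :=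
  ⟨v, memℓp_infty ⟨C, by rintro _ ⟨n, rfl⟩; exact h n⟩⟩

/-- The indicator sequence of a set of integers, as an element of `ℓ∞`. -/
noncomputable def Linf.ind (J : Set ℕ) : Linf :=
  Linf.mk (J.indicator 1) 1 (by
    intro n
    by_cases h : n ∈ J <;> simp [h])

open Classical in
theorem Linf.ind_apply (J : Set ℕ) (n : ℕ) : Linf.ind J n = if n ∈ J then 1 else 0 := by
  change J.indicator 1 n = _
  simp [Set.indicator_apply]

/-- The operator `u ↦ 1_J · (u ∘ σ)` of `ℓ∞`, of norm at most one. -/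
noncomputable def Linf.pull (J : Set ℕ) (σ : ℕ → ℕ) : Linf →L[ℝ] Linf :=
  LinearMap.mkContinuous
    { toFun := fun u => Linf.mk (J.indicator fun n => u (σ n)) ‖u‖ (by
        intro n
        by_cases h : n ∈ J <;> simp [h, Linf.abs_apply_le])
      map_add' := by
        intro u v
        ext n
        change J.indicator (fun n => (u + v) (σ n)) n
          = J.indicator (fun n => u (σ n)) n + J.indicator (fun n => v (σ n)) n
        by_cases h : n ∈ J <;> simp [h]
      map_smul' := by
        intro c u
        ext n
        change J.indicator (fun n => (c • u) (σ n)) n = c * J.indicator (fun n => u (σ n)) n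
        by_cases h : n ∈ J <;> simp [h] } 1 (by
    intro u
    rw [one_mul]
    refine Linf.norm_le _ (norm_nonneg _) fun n => ?_
    change |J.indicator (fun n => u (σ n)) n| ≤ _
    by_cases h : n ∈ J <;> simp [h, Linf.abs_apply_le])

open Classical in
theorem Linf.pull_apply (J : Set ℕ) (σ : ℕ → ℕ) (u : Linf) (n : ℕ) :
    Linf.pull J σ u n = if n ∈ J then u (σ n) else 0 := by
  change J.indicator (fun n => u (σ n)) n = _
  simp [Set.indicator_apply]

theorem Linf.norm_pull_le (J : Set ℕ) (σ : ℕ → ℕ) (u : Linf) : ‖Linf.pull J σ u‖ ≤ ‖u‖ := by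
  refine Linf.norm_le _ (norm_nonneg _) fun n => ?_
  rw [Linf.pull_apply]
  split_ifs <;> simp [Linf.abs_apply_le]

/-- The total variation on `J` of the finitely additive measure represented by `m ∈ (ℓ∞)*`,
expressed as the norm of the restriction of `m` to sequences supported in `J`. -/
noncomputable def Linf.var (m : Linf →L[ℝ] ℝ) (J : Set ℕ) : ℝ := ‖m.comp (Linf.pull J id)‖

theorem Linf.var_nonneg (m : Linf →L[ℝ] ℝ) (J : Set ℕ) : 0 ≤ Linf.var m J := norm_nonneg _

theorem Linf.abs_pull_le (m : Linf →L[ℝ] ℝ) (J : Set ℕ) (u : Linf) :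
    |m (Linf.pull J id u)| ≤ Linf.var m J * ‖u‖ :=
  (m.comp (Linf.pull J id)).le_opNorm u

theorem Linf.var_le_norm (m : Linf →L[ℝ] ℝ) (J : Set ℕ) : Linf.var m J ≤ ‖m‖ := by
  refine ContinuousLinearMap.opNorm_le_bound _ (norm_nonneg _) fun u => ?_
  exact (m.le_opNorm _).trans (by gcongr; exact Linf.norm_pull_le _ _ _)

theorem Linf.pull_univ (u : Linf) : Linf.pull Set.univ id u = u := by
  ext n
  simp [Linf.pull_apply]

theorem Linf.var_add_le (m : Linf →L[ℝ] ℝ) {A B : Set ℕ} (h : Disjoint A B) :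
    Linf.var m A + Linf.var m B ≤ Linf.var m (A ∪ B) := by
  have key : ∀ u v : Linf, ‖u‖ ≤ 1 → ‖v‖ ≤ 1 →
      |m (Linf.pull A id u) + m (Linf.pull B id v)| ≤ Linf.var m (A ∪ B) := by
    intro u v hu hv
    have e : Linf.pull A id u + Linf.pull B id v
        = Linf.pull (A ∪ B) id (Linf.pull A id u + Linf.pull B id v) := by
      ext n
      simp only [Linf.pull_apply, lp.coeFn_add, Pi.add_apply, Set.mem_union, id]
      by_cases hA : n ∈ A <;> by_cases hB : n ∈ B <;> simp [hA, hB]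
    have hn : ‖Linf.pull A id u + Linf.pull B id v‖ ≤ 1 := by
      refine Linf.norm_le _ zero_le_one fun n => ?_
      simp only [Linf.pull_apply, lp.coeFn_add, Pi.add_apply, id]
      have h1 := (Linf.abs_apply_le u n).trans hu
      have h2 := (Linf.abs_apply_le v n).trans hv
      by_cases hA : n ∈ A
      · have hB : n ∉ B := fun hB => (Set.disjoint_left.1 h) hA hB
        simpa [hA, hB] using h1
      · by_cases hB : n ∈ B <;> simp [hA, hB, h2]
    rw [← map_add, e]
    refine (Linf.abs_pull_le _ _ _).trans ?_
    exact mul_le_of_le_one_right (Linf.var_nonneg _ _) hn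
  have key2 : ∀ u v : Linf, ‖u‖ ≤ 1 → ‖v‖ ≤ 1 →
      |m (Linf.pull A id u)| + |m (Linf.pull B id v)| ≤ Linf.var m (A ∪ B) := by
    intro u v hu hv
    have h1 := abs_le.1 (key u v hu hv)
    have h2 := abs_le.1 (key u (-v) hu (by rwa [norm_neg]))
    simp only [map_neg] at h2
    rcases abs_cases (m (Linf.pull A id u)) with h3 | h3 <;>
    rcases abs_cases (m (Linf.pull B id v)) with h4 | h4 <;> linarith
  have h3 : ∀ u : Linf, ‖u‖ ≤ 1 →
      Linf.var m B ≤ Linf.var m (A ∪ B) - |m (Linf.pull A id u)| := by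
    intro u hu
    refine ContinuousLinearMap.opNorm_le_of_unit_norm ?_ fun v hv => ?_
    · have := key2 u 0 hu (by simp)
      simp at this
      linarith
    · have := key2 u v hu hv.le
      rw [Real.norm_eq_abs, ContinuousLinearMap.comp_apply]
      linarith
  have h4 : Linf.var m A ≤ Linf.var m (A ∪ B) - Linf.var m B := by
    refine ContinuousLinearMap.opNorm_le_of_unit_norm ?_ fun u hu => ?_
    · have := h3 0 (by simp)
      simp at this
      linarith
    · have := h3 u hu.le
      rw [Real.norm_eq_abs, ContinuousLinearMap.comp_apply]
      linarith
  linarith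

/-- The variation of a charge is at most twice the supremum of its absolute values: with
`s = 1_{E, u ≥ 0} - 1_{E, u < 0}` and `‖u‖ = 1`, the sequence `1_E · u` equals `(s + u') / 2` for
some `u'` supported in `E` with `‖u'‖ ≤ 1`. -/
theorem Linf.var_le_of_ind (m : Linf →L[ℝ] ℝ) (E : Set ℕ) (B : ℝ)
    (h : ∀ F ⊆ E, |m (Linf.ind F)| ≤ B) : Linf.var m E ≤ 2 * B := by
  have hB : 0 ≤ B := (abs_nonneg _).trans (h E subset_rfl)
  have : Linf.var m E ≤ B + Linf.var m E / 2 := by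
    refine ContinuousLinearMap.opNorm_le_of_unit_norm
      (add_nonneg hB (div_nonneg (Linf.var_nonneg _ _) zero_le_two)) fun u hu => ?_
    set P : Set ℕ := E ∩ {n | 0 ≤ u n} with hP
    set N : Set ℕ := E ∩ {n | u n < 0} with hN
    set u' : Linf := (2 : ℝ) • Linf.pull E id u - (Linf.ind P - Linf.ind N) with hu'
    have hn : ‖u'‖ ≤ 1 := by
      refine Linf.norm_le _ zero_le_one fun n => ?_
      classical
      have h1 := abs_le.1 ((Linf.abs_apply_le u n).trans hu.le)
      simp only [hu', lp.coeFn_sub, lp.coeFn_smul, Pi.sub_apply, Pi.smul_apply, smul_eq_mul,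
        Linf.pull_apply, Linf.ind_apply, hP, hN, Set.mem_inter_iff, Set.mem_ofPred_eq, id]
      by_cases hE : n ∈ E
      · by_cases h0 : 0 ≤ u n
        · simp only [hE, h0, not_lt.2 h0, if_true, and_true, and_false, if_false]
          rw [abs_le]; constructor <;> linarith
        · simp only [hE, h0, not_le.1 h0, if_true, and_true, and_false, if_false]
          rw [not_le] at h0
          rw [abs_le]; constructor <;> linarith
      · simp [hE]
    have hE : u' = Linf.pull E id u' := by
      ext n
      simp only [hu', lp.coeFn_sub, lp.coeFn_smul, Pi.sub_apply, Pi.smul_apply, smul_eq_mul,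
        Linf.pull_apply, Linf.ind_apply, hP, hN, Set.mem_inter_iff, Set.mem_ofPred_eq, id]
      by_cases hE : n ∈ E <;> simp [hE]
    have e : Linf.pull E id u
        = (1 / 2 : ℝ) • (Linf.ind P - Linf.ind N) + (1 / 2 : ℝ) • u' := by
      rw [hu']
      module
    have hmu' : |m u'| ≤ Linf.var m E := by
      rw [hE]
      exact (Linf.abs_pull_le _ _ _).trans (mul_le_of_le_one_right (Linf.var_nonneg _ _) hn)
    have h1 := abs_le.1 (h P Set.inter_subset_left)
    have h2 := abs_le.1 (h N Set.inter_subset_left)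
    have h3 := abs_le.1 hmu'
    rw [Real.norm_eq_abs, ContinuousLinearMap.comp_apply, e]
    simp only [map_add, map_smul, map_sub, smul_eq_mul]
    rw [abs_le]
    constructor <;> linarith
  linarith

/-! ### Rosenthal's lemma and copies of `ℓ∞` -/

/-- Rosenthal's disjointification lemma, for a uniformly bounded sequence of nonnegative
superadditive set functions on `ℕ`. The induction is on the number `N` of times `δ` fits into the
bound: if no piece `S_p` of a partition of `S` into infinite sets is suitable, choosing one bad
index in each piece gives a set on which the bound has dropped by `δ`. -/
theorem rosenthal_aux (a : ℕ → Set ℕ → ℝ) (h0 : ∀ n L, 0 ≤ a n L)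
    (hadd : ∀ n L₁ L₂, Disjoint L₁ L₂ → a n L₁ + a n L₂ ≤ a n (L₁ ∪ L₂))
    (δ : ℝ) (hδ : 0 ≤ δ) (N : ℕ) : ∀ S : Set ℕ, S.Infinite → (∀ n ∈ S, a n S ≤ N * δ) →
      ∃ L : Set ℕ, L.Infinite ∧ ∀ n ∈ L, a n (L \ {n}) ≤ δ := by
  have mono : ∀ n (L₁ L₂ : Set ℕ), L₁ ⊆ L₂ → a n L₁ ≤ a n L₂ := by
    intro n L₁ L₂ h
    have h1 := hadd n L₁ (L₂ \ L₁) Set.disjoint_sdiff_right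
    rw [Set.union_sdiff_cancel h] at h1
    linarith [h0 n (L₂ \ L₁)]
  induction N with
  | zero =>
    intro S hS h
    refine ⟨S, hS, fun n hn => ?_⟩
    have h1 := h n hn
    have h2 := mono n (S \ {n}) S Set.sdiff_subset
    simp only [Nat.cast_zero, zero_mul] at h1
    linarith
  | succ N ih =>
    intro S hS h
    let e := hS.natEmbedding
    let P : ℕ → Set ℕ := fun p => Set.range fun q => (e (Nat.pair p q) : ℕ)
    have hPinj : ∀ p, Function.Injective fun q => (e (Nat.pair p q) : ℕ) := by
      intro p q q' hq
      have := e.injective (Subtype.ext hq)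
      exact (Nat.pair_eq_pair.1 this).2
    have hPS : ∀ p, P p ⊆ S := by
      rintro p _ ⟨q, rfl⟩
      exact (e (Nat.pair p q)).2
    have hPdisj : ∀ p p' k, k ∈ P p → k ∈ P p' → p = p' := by
      rintro p p' _ ⟨q, rfl⟩ ⟨q', hq'⟩
      have := e.injective (Subtype.ext hq')
      exact (Nat.pair_eq_pair.1 this).1.symm
    by_cases hgood : ∃ p, ∀ n ∈ P p, a n (P p \ {n}) ≤ δ
    · obtain ⟨p, hp⟩ := hgood
      exact ⟨P p, Set.infinite_range_of_injective (hPinj p), hp⟩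
    push Not at hgood
    choose k hk hkδ using hgood
    have hkinj : Function.Injective k := by
      intro p p' hpp
      exact hPdisj p p' (k p) (hk p) (hpp ▸ hk p')
    refine ih (Set.range k) (Set.infinite_range_of_injective hkinj) ?_
    rintro _ ⟨p, rfl⟩
    have hd : Disjoint (Set.range k) (P p \ {k p}) := by
      rw [Set.disjoint_left]
      rintro _ ⟨p', rfl⟩ ⟨h1, h2⟩
      exact h2 (by rw [hPdisj p' p (k p') (hk p') h1]; rfl)
    have h1 := hadd (k p) _ _ hd
    have h2 := mono (k p) (Set.range k ∪ (P p \ {k p})) S (by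
      refine Set.union_subset ?_ (Set.sdiff_subset.trans (hPS p))
      rintro _ ⟨p', rfl⟩
      exact hPS p' (hk p'))
    have h3 := h (k p) (hPS p (hk p))
    have h4 := hkδ p
    push_cast at h3
    linarith

theorem rosenthal (a : ℕ → Set ℕ → ℝ) (h0 : ∀ n L, 0 ≤ a n L)
    (hadd : ∀ n L₁ L₂, Disjoint L₁ L₂ → a n L₁ + a n L₂ ≤ a n (L₁ ∪ L₂))
    (C : ℝ) (hC : ∀ n L, a n L ≤ C) (δ : ℝ) (hδ : 0 < δ) :
    ∃ L : Set ℕ, L.Infinite ∧ ∀ n ∈ L, a n (L \ {n}) ≤ δ := by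
  obtain ⟨N, hN⟩ := exists_nat_ge (C / δ)
  refine rosenthal_aux a h0 hadd δ hδ.le N Set.univ Set.infinite_univ fun n _ => (hC n _).trans ?_
  rwa [div_le_iff₀ hδ] at hN

/-- Rosenthal's theorem: an operator on `ℓ∞` that is bounded below on the unit vectors is an isomorphism
on the sequences supported in some infinite set `L`. For `n ∈ L` a functional norming the image of
the `n`-th unit vector sees little of the coordinates in `L \ {n}`. -/
theorem containsIsoCopyOfLinfty_of_norm_ge {X : Type*} [NormedAddCommGroup X] [NormedSpace ℝ X]
    (T : Linf →L[ℝ] X) (ε : ℝ) (hε : 0 < ε) (hT : ∀ n, ε ≤ ‖T (Linf.ind {n})‖) :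
    ContainsIsoCopyOfLinfty X := by
  choose f hf1 hf2 using fun n => exists_dual_vector'' ℝ (T (Linf.ind {n}))
  obtain ⟨L, hL, hLδ⟩ := rosenthal (fun n J => Linf.var ((f n).comp T) J)
    (fun n J => Linf.var_nonneg _ _) (fun n _ _ h => Linf.var_add_le _ h) ‖T‖
    (fun n J => (Linf.var_le_norm _ _).trans
      (((f n).opNorm_comp_le T).trans (mul_le_of_le_one_left (norm_nonneg _) (hf1 n))))
    (ε / 2) (half_pos hε)
  let φ := hL.natEmbedding
  let ψ : ℕ → ℕ := fun i => φ i
  have hψ : Function.Injective ψ := fun i j h => φ.injective (Subtype.ext h)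
  have hψL : ∀ i, ψ i ∈ L := fun i => (φ i).2
  let S : Linf →L[ℝ] Linf := Linf.pull (Set.range ψ) (Function.invFun ψ)
  have hS : ∀ u i, S u (ψ i) = u i := by
    intro u i
    simp [S, Linf.pull_apply, Function.leftInverse_invFun hψ i]
  refine ⟨T.comp S, ε / 2, half_pos hε, fun u => ?_⟩
  have key : ∀ i, |u i| ≤ (‖T (S u)‖ + ε / 2 * ‖u‖) / ε := by
    intro i
    have e : S u = u i • Linf.ind {ψ i} + Linf.pull (L \ {ψ i}) id (S u) := by
      ext n
      simp only [lp.coeFn_add, lp.coeFn_smul, Pi.add_apply, Pi.smul_apply, smul_eq_mul,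
        Linf.pull_apply, Linf.ind_apply, Set.mem_singleton_iff, Set.mem_sdiff, id]
      by_cases hn : n = ψ i
      · subst hn
        simp [hS]
      · by_cases hnL : n ∈ L
        · simp [hn, hnL]
        · have : n ∉ Set.range ψ := by
            rintro ⟨j, rfl⟩
            exact hnL (hψL j)
          simp only [hn, S, Linf.pull_apply, this]
          simp
    have h1 : |f (ψ i) (T (S u))| ≤ ‖T (S u)‖ :=
      ((f (ψ i)).le_opNorm _).trans (mul_le_of_le_one_left (norm_nonneg _) (hf1 _))
    have h2 : |((f (ψ i)).comp T) (Linf.pull (L \ {ψ i}) id (S u))| ≤ ε / 2 * ‖u‖ := by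
      refine (Linf.abs_pull_le _ _ _).trans ?_
      gcongr
      · exact hLδ _ (hψL i)
      · exact Linf.norm_pull_le _ _ _
    have h3 : f (ψ i) (T (S u)) = u i * ‖T (Linf.ind {ψ i})‖
        + ((f (ψ i)).comp T) (Linf.pull (L \ {ψ i}) id (S u)) := by
      conv_lhs => rw [e]
      rw [map_add, map_smul, map_add, map_smul, hf2]
      rfl
    have h4 : |u i| * ‖T (Linf.ind {ψ i})‖ ≤ ‖T (S u)‖ + ε / 2 * ‖u‖ := by
      rw [← abs_of_nonneg (norm_nonneg (T (Linf.ind {ψ i}))), ← abs_mul, eq_sub_of_add_eq h3.symm]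
      exact (abs_sub _ _).trans (add_le_add h1 h2)
    rw [le_div_iff₀ hε]
    exact (mul_le_mul_of_nonneg_left (hT _) (abs_nonneg _)).trans h4
  have h := Linf.norm_le u (by positivity) key
  rw [le_div_iff₀ hε] at h
  rw [ContinuousLinearMap.comp_apply]
  linarith

/-! ### Nikodym's boundedness theorem and Seever's theorem -/

theorem Linf.ind_union {A B : Set ℕ} (h : Disjoint A B) :
    Linf.ind (A ∪ B) = Linf.ind A + Linf.ind B := by
  classical
  ext n
  simp only [lp.coeFn_add, Pi.add_apply, Linf.ind_apply, Set.mem_union]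
  by_cases hA : n ∈ A
  · have hB : n ∉ B := fun hB => (Set.disjoint_left.1 h) hA hB
    simp [hA, hB]
  · simp [hA]

theorem Linf.var_mono (m : Linf →L[ℝ] ℝ) {A B : Set ℕ} (h : A ⊆ B) :
    Linf.var m A ≤ Linf.var m B := by
  have h1 := Linf.var_add_le m (Set.disjoint_sdiff_right (s := A) (t := B))
  rw [Set.union_sdiff_cancel h] at h1
  linarith [Linf.var_nonneg m (B \ A)]

theorem Linf.var_le_add_sdiff (m : Linf →L[ℝ] ℝ) {F E : Set ℕ} (h : F ⊆ E) :
    Linf.var m E ≤ Linf.var m F + Linf.var m (E \ F) := by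
  have e : m.comp (Linf.pull E id)
      = m.comp (Linf.pull F id) + m.comp (Linf.pull (E \ F) id) := by
    ext u
    simp only [ContinuousLinearMap.comp_apply, add_apply]
    rw [← map_add]
    congr 1
    classical
    ext n
    simp only [lp.coeFn_add, Pi.add_apply, Linf.pull_apply, Set.mem_sdiff, id]
    by_cases hF : n ∈ F
    · simp [hF, h hF]
    · simp [hF]
  unfold Linf.var
  rw [e]
  exact norm_add_le _ _

theorem Linf.abs_ind_le_var (m : Linf →L[ℝ] ℝ) (V : Set ℕ) : |m (Linf.ind V)| ≤ Linf.var m V := by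
  have e : Linf.ind V = Linf.pull V id (Linf.ind V) := by
    ext n
    simp only [Linf.pull_apply, Linf.ind_apply, id]
    by_cases h : n ∈ V <;> simp [h]
  have hn : ‖Linf.ind V‖ ≤ 1 := by
    refine Linf.norm_le _ zero_le_one fun n => ?_
    rw [Linf.ind_apply]
    split_ifs <;> simp
  rw [e]
  exact (Linf.abs_pull_le _ _ _).trans (mul_le_of_le_one_right (Linf.var_nonneg _ _) hn)

/-- One step of the gliding hump: a set `E` on which the family has unbounded variation contains a
set `F` on which one member is large, comparably to its variation on `E`, and which leaves the
family unbounded on `E \ F`. -/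
theorem nikodym_step (𝓕 : Set (Linf →L[ℝ] ℝ)) (q : Set ℕ → ℝ) (hq0 : ∀ J, 0 ≤ q J)
    (hq : ∀ m ∈ 𝓕, ∀ J, |m (Linf.ind J)| ≤ q J) (E : Set ℕ)
    (hE : ∀ K : ℝ, ∃ m ∈ 𝓕, K < Linf.var m E) (R : ℝ) :
    ∃ m ∈ 𝓕, ∃ F ⊆ E, (∀ K : ℝ, ∃ m ∈ 𝓕, K < Linf.var m (E \ F)) ∧ R ≤ |m (Linf.ind F)| ∧
      Linf.var m E ≤ 8 * |m (Linf.ind F)| := by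
  obtain ⟨m, hm, hmE⟩ := hE (8 * (|R| + q E))
  have hR := le_abs_self R
  have hR0 := abs_nonneg R
  have hqE := hq0 E
  obtain ⟨G, hGE, hG⟩ : ∃ G ⊆ E, Linf.var m E / 4 < |m (Linf.ind G)| := by
    by_contra! h
    have := Linf.var_le_of_ind m E _ h
    linarith
  have hGc : Linf.var m E / 8 ≤ |m (Linf.ind (E \ G))| := by
    have h1 := Linf.ind_union (Set.disjoint_sdiff_right (s := G) (t := E))
    rw [Set.union_sdiff_cancel hGE] at h1
    have h2 : m (Linf.ind G) = m (Linf.ind E) - m (Linf.ind (E \ G)) := by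
      rw [h1, map_add]; ring
    have h3 := abs_sub (m (Linf.ind E)) (m (Linf.ind (E \ G)))
    rw [← h2] at h3
    have h4 := hq m hm E
    linarith
  by_cases hbad : ∀ K : ℝ, ∃ m ∈ 𝓕, K < Linf.var m G
  · refine ⟨m, hm, E \ G, Set.sdiff_subset, ?_, by linarith, by linarith⟩
    rwa [Set.sdiff_sdiff_cancel_left hGE]
  · refine ⟨m, hm, G, hGE, ?_, by linarith, by linarith⟩
    push Not at hbad
    obtain ⟨K₀, hK₀⟩ := hbad
    intro K
    obtain ⟨m', hm', h'⟩ := hE (K + K₀)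
    have h1 := Linf.var_le_add_sdiff m' hGE
    have h2 := hK₀ m' hm'
    exact ⟨m', hm', by linarith⟩

/-- Nikodym's boundedness theorem on the power set of `ℕ`, for bounded finitely additive
measures seen as functionals on `ℓ∞`. If it failed, `nikodym_step` would give disjoint sets `F n` and
members `m n` of the family with `|m n (F n)|` large. Rosenthal's lemma thins these out to indices
`n ∈ L` for which `m n` is mostly carried by `F n` among the later sets, so that the values of `m n`
on `⋃ k ∈ L, F k` are unbounded. -/
theorem nikodym (𝓕 : Set (Linf →L[ℝ] ℝ)) (q : Set ℕ → ℝ) (hq0 : ∀ J, 0 ≤ q J)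
    (hq : ∀ m ∈ 𝓕, ∀ J, |m (Linf.ind J)| ≤ q J) : ∃ K : ℝ, ∀ m ∈ 𝓕, ‖m‖ ≤ K := by
  by_contra! hcon
  have hbad0 : ∀ K : ℝ, ∃ m ∈ 𝓕, K < Linf.var m Set.univ := by
    intro K
    obtain ⟨m, hm, h⟩ := hcon K
    refine ⟨m, hm, h.trans_le ?_⟩
    refine ContinuousLinearMap.opNorm_le_bound _ (Linf.var_nonneg _ _) fun u => ?_
    have := Linf.abs_pull_le m Set.univ u
    rwa [Linf.pull_univ] at this
  -- A state is a bad set `E` with a bound `c` for the total of `q` over the sets removed so far.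
  let St := {p : Set ℕ × ℝ // ∀ K : ℝ, ∃ m ∈ 𝓕, K < Linf.var m p.1}
  choose mm hmm FF hFF hFbad hFlarge hFvar using fun s : St =>
    nikodym_step 𝓕 q hq0 hq s.1.1 s.2 (4 * s.1.2 + 1)
  let next : St → St := fun s => ⟨(s.1.1 \ FF s, s.1.2 + q (FF s) + 1), hFbad s⟩
  let st : ℕ → St := fun n => next^[n] ⟨(Set.univ, 0), hbad0⟩
  have hst : ∀ n, st (n + 1) = next (st n) := fun n => Function.iterate_succ_apply' _ _ _
  let E : ℕ → Set ℕ := fun n => (st n).1.1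
  let c : ℕ → ℝ := fun n => (st n).1.2
  let F : ℕ → Set ℕ := fun n => FF (st n)
  let m : ℕ → Linf →L[ℝ] ℝ := fun n => mm (st n)
  have hm : ∀ n, m n ∈ 𝓕 := fun n => hmm _
  have hE : ∀ n, E (n + 1) = E n \ F n := fun n => by simp only [E, hst]; rfl
  have hc : ∀ n, c (n + 1) = c n + q (F n) + 1 := fun n => by simp only [c, hst]; rfl
  have hc0 : c 0 = 0 := rfl
  have hFE : ∀ n, F n ⊆ E n := fun n => hFF _
  have hlarge : ∀ n, 4 * c n + 1 ≤ |m n (Linf.ind (F n))| := fun n => hFlarge _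
  have hvar : ∀ n, Linf.var (m n) (E n) ≤ 8 * |m n (Linf.ind (F n))| := fun n => hFvar _
  have hanti : Antitone E := antitone_nat_of_succ_le fun n => by
    rw [hE]; exact Set.sdiff_subset
  have hcn : ∀ n : ℕ, (n : ℝ) ≤ c n := by
    intro n
    induction n with
    | zero => simp [hc0]
    | succ n ih => rw [hc]; push_cast; linarith [hq0 (F n)]
  have hFdisj' : ∀ k l, k < l → Disjoint (F k) (F l) := by
    intro k l hkl
    rw [Set.disjoint_left]
    intro x hx hx'
    have h1 : x ∈ E (k + 1) := hanti hkl (hFE l hx')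
    rw [hE] at h1
    exact h1.2 hx
  have hFdisj : ∀ k l, k ≠ l → Disjoint (F k) (F l) := by
    intro k l hkl
    rcases lt_or_gt_of_ne hkl with h | h
    · exact hFdisj' k l h
    · exact (hFdisj' l k h).symm
  have hUdisj : ∀ A B : Set ℕ, Disjoint A B → Disjoint (⋃ k ∈ A, F k) (⋃ k ∈ B, F k) := by
    intro A B hAB
    simp only [Set.disjoint_iUnion_left, Set.disjoint_iUnion_right]
    intro k hk l hl
    exact hFdisj l k fun h => Set.disjoint_left.1 hAB hl (by rwa [h])
  have hpos : ∀ n, 0 < |m n (Linf.ind (F n))| := by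
    intro n
    have h1 := hcn n
    have h2 : (0 : ℝ) ≤ n := Nat.cast_nonneg n
    linarith [hlarge n]
  obtain ⟨L, hL, hLa⟩ := rosenthal
    (fun n J => Linf.var (m n) (⋃ k ∈ J ∩ Set.Ioi n, F k) / |m n (Linf.ind (F n))|)
    (fun n J => div_nonneg (Linf.var_nonneg _ _) (abs_nonneg _))
    (fun n A B hAB => by
      rw [← add_div, Set.union_inter_distrib_right, Set.biUnion_union]
      gcongr
      exact Linf.var_add_le _ (hUdisj _ _
        (hAB.mono Set.inter_subset_left Set.inter_subset_left)))
    8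
    (fun n J => by
      rw [div_le_iff₀ (hpos n)]
      refine (Linf.var_mono _ ?_).trans (hvar n)
      refine Set.iUnion₂_subset fun k hk => (hFE k).trans (hanti (le_of_lt hk.2)))
    (1 / 2) (by norm_num)
  -- The sets removed before stage `n` contribute at most `c n`.
  have hhead : ∀ m' ∈ 𝓕, ∀ n, |m' (Linf.ind (⋃ k ∈ L ∩ Set.Iio n, F k))| ≤ c n := by
    intro m' hm' n
    induction n with
    | zero =>
      have e : Linf.ind (⋃ k ∈ L ∩ Set.Iio 0, F k) = 0 := by
        ext x
        simp [Linf.ind_apply]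
      rw [e, hc0]
      simp
    | succ n ih =>
      rw [hc]
      have h1 := hq0 (F n)
      by_cases hn : n ∈ L
      · have e : L ∩ Set.Iio (n + 1) = (L ∩ Set.Iio n) ∪ {n} := by
          ext k
          simp only [Set.mem_inter_iff, Set.mem_Iio, Set.mem_union, Set.mem_singleton_iff]
          constructor
          · rintro ⟨h1, h2⟩
            rcases Nat.lt_succ_iff_lt_or_eq.1 h2 with h | h
            · exact Or.inl ⟨h1, h⟩
            · exact Or.inr h
          · rintro (⟨h1, h2⟩ | rfl)
            · exact ⟨h1, by omega⟩
            · exact ⟨hn, by omega⟩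
        rw [e, Set.biUnion_union, Linf.ind_union (hUdisj _ _ (by simp)), map_add]
        have h2 := hq m' hm' (F n)
        rw [Set.biUnion_singleton]
        have h3 := abs_add_le (m' (Linf.ind (⋃ k ∈ L ∩ Set.Iio n, F k))) (m' (Linf.ind (F n)))
        linarith
      · have e : L ∩ Set.Iio (n + 1) = L ∩ Set.Iio n := by
          ext k
          simp only [Set.mem_inter_iff, Set.mem_Iio]
          constructor
          · rintro ⟨h2, h3⟩
            refine ⟨h2, lt_of_le_of_ne (Nat.lt_succ_iff.1 h3) ?_⟩
            rintro rfl
            exact hn h2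
          · rintro ⟨h1, h2⟩
            exact ⟨h1, by omega⟩
        rw [e]
        linarith
  have hfinal : ∀ n ∈ L, (n : ℝ) ≤ q (⋃ k ∈ L, F k) := by
    intro n hn
    have e : L = (L ∩ Set.Iio n ∪ {n}) ∪ (L \ {n}) ∩ Set.Ioi n := by
      ext k
      simp only [Set.mem_inter_iff, Set.mem_Iio, Set.mem_union, Set.mem_singleton_iff,
        Set.mem_sdiff, Set.mem_Ioi]
      constructor
      · intro hk
        rcases lt_trichotomy k n with h | h | h
        · exact Or.inl (Or.inl ⟨hk, h⟩)
        · exact Or.inl (Or.inr h)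
        · exact Or.inr ⟨⟨hk, h.ne'⟩, h⟩
      · rintro ((h | rfl) | h)
        · exact h.1
        · exact hn
        · exact h.1.1
    have hU : Linf.ind (⋃ k ∈ L, F k) = Linf.ind (⋃ k ∈ L ∩ Set.Iio n, F k) + Linf.ind (F n)
        + Linf.ind (⋃ k ∈ (L \ {n}) ∩ Set.Ioi n, F k) := by
      conv_lhs => rw [e]
      rw [Set.biUnion_union, Linf.ind_union (hUdisj _ _ ?_), Set.biUnion_union,
        Linf.ind_union (hUdisj _ _ (by simp)), Set.biUnion_singleton]
      rw [Set.disjoint_left]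
      rintro k (hk | hk) hk'
      · exact lt_asymm (Set.mem_Iio.1 hk.2) (Set.mem_Ioi.1 hk'.2)
      · exact hk'.1.2 hk
    have h1 := hq (m n) (hm n) (⋃ k ∈ L, F k)
    rw [hU, map_add, map_add] at h1
    have h2 := hhead (m n) (hm n) n
    have h3 := Linf.abs_ind_le_var (m n) (⋃ k ∈ (L \ {n}) ∩ Set.Ioi n, F k)
    have h4 := hLa n hn
    rw [div_le_iff₀ (hpos n)] at h4
    have h5 := hlarge n
    have h6 := hcn n
    set a := m n (Linf.ind (⋃ k ∈ L ∩ Set.Iio n, F k))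
    set b := m n (Linf.ind (F n))
    set d := m n (Linf.ind (⋃ k ∈ (L \ {n}) ∩ Set.Ioi n, F k))
    have h7 : |b| ≤ |a + b + d| + |a| + |d| := by
      have : b = (a + b + d) - a - d := by ring
      conv_lhs => rw [this]
      exact (abs_sub _ _).trans (add_le_add (abs_sub _ _) le_rfl)
    linarith
  obtain ⟨N, hN⟩ := exists_nat_gt (q (⋃ k ∈ L, F k))
  obtain ⟨n, hnL, hn⟩ := hL.exists_gt N
  have h1 := hfinal n hnL
  have h2 : (N : ℝ) < n := by exact_mod_cast hn
  linarith

/-- Seever's theorem: an operator into `ℓ∞` whose range contains all indicator sequences is onto.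
By Nikodym's theorem and the Hahn–Banach theorem, the image of the unit ball is dense in a ball. -/
theorem surjective_of_ind_mem_range {G : Type*} [NormedAddCommGroup G] [NormedSpace ℝ G]
    [CompleteSpace G] (π : G →L[ℝ] Linf) (h : ∀ J, ∃ g, π g = Linf.ind J) :
    Function.Surjective π := by
  choose g hg using h
  obtain ⟨K₀, hK₀⟩ := nikodym {m | ‖m.comp π‖ ≤ 1} (fun J => ‖g J‖) (fun J => norm_nonneg _)
    (fun m hm J => by
      rw [← hg]
      exact ((m.comp π).le_opNorm (g J)).trans (mul_le_of_le_one_left (norm_nonneg _) hm))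
  obtain ⟨K, hK0, hK⟩ : ∃ K : ℝ, 0 < K ∧ ∀ m : Linf →L[ℝ] ℝ, ‖m.comp π‖ ≤ 1 → ‖m‖ ≤ K :=
    ⟨max K₀ 1, by positivity, fun m hm => (hK₀ m hm).trans (le_max_left _ _)⟩
  have hball : ∀ v : Linf, ‖v‖ * K < 1 → v ∈ closure (π '' Metric.closedBall 0 1) := by
    intro v hv
    by_contra hv'
    obtain ⟨m, t, hm1, hm2⟩ := geometric_hahn_banach_closed_point
      (((convex_closedBall (0 : G) 1).linear_image (π : G →ₗ[ℝ] Linf)).closure)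
      isClosed_closure hv'
    have hm1' : ∀ x : G, ‖x‖ ≤ 1 → m (π x) < t := fun x hx =>
      hm1 _ (subset_closure ⟨x, by simpa using hx, rfl⟩)
    have ht : 0 < t := by simpa using hm1' 0 (by simp)
    have h1 : ‖(t⁻¹ • m).comp π‖ ≤ 1 := by
      refine ContinuousLinearMap.opNorm_le_of_unit_norm zero_le_one fun x hx => ?_
      have h2 := hm1' x hx.le
      have h3 := hm1' (-x) (by rw [norm_neg]; exact hx.le)
      rw [map_neg, map_neg] at h3
      simp only [ContinuousLinearMap.comp_apply, smul_apply, smul_eq_mul,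
        Real.norm_eq_abs]
      rw [abs_mul, abs_of_pos (inv_pos.2 ht), inv_mul_le_iff₀ ht, mul_one, abs_le]
      constructor <;> linarith
    have h2 := hK _ h1
    have h3 := (le_abs_self _).trans ((t⁻¹ • m).le_opNorm v)
    simp only [smul_apply, smul_eq_mul] at h3
    have h4 : t⁻¹ * m v < 1 := by
      refine h3.trans_lt (lt_of_le_of_lt ?_ hv)
      rw [mul_comm]
      gcongr
    rw [inv_mul_lt_iff₀ ht, mul_one] at h4
    linarith
  have happrox : ∀ v : Linf, ∃ x, ‖v - π x‖ ≤ 1 / 2 * ‖v‖ ∧ ‖x‖ ≤ 2 * K * ‖v‖ := by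
    intro v
    rcases eq_or_ne v 0 with rfl | hv
    · exact ⟨0, by simp⟩
    have hv0 : 0 < ‖v‖ := norm_pos_iff.2 hv
    set s : ℝ := 2 * K * ‖v‖ with hs
    have hs0 : 0 < s := by positivity
    have h1 : s⁻¹ • v ∈ closure (π '' Metric.closedBall 0 1) := by
      apply hball
      rw [norm_smul, norm_inv, Real.norm_eq_abs, abs_of_pos hs0, hs]
      field_simp
      norm_num
    obtain ⟨_, ⟨x, hx, rfl⟩, hd⟩ := Metric.mem_closure_iff.1 h1 (1 / 2 * ‖v‖ / s) (by positivity)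
    refine ⟨s • x, ?_, ?_⟩
    · have e : v - π (s • x) = s • (s⁻¹ • v - π x) := by
        rw [smul_sub, smul_smul, mul_inv_cancel₀ hs0.ne', one_smul, map_smul]
      rw [dist_eq_norm, lt_div_iff₀ hs0] at hd
      rw [e, norm_smul, Real.norm_eq_abs, abs_of_pos hs0, mul_comm]
      exact hd.le
    · rw [norm_smul, Real.norm_eq_abs, abs_of_pos hs0]
      exact mul_le_of_le_one_right hs0.le (by simpa using hx)
  choose r hr1 hr2 using happrox
  intro v
  -- Successive approximation, as in the proof of the open mapping theorem.
  let w : ℕ → Linf := fun n => (fun y => y - π (r y))^[n] v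
  have hw : ∀ n, w (n + 1) = w n - π (r (w n)) := fun n => Function.iterate_succ_apply' _ _ _
  have hwn : ∀ n, ‖w n‖ ≤ (1 / 2) ^ n * ‖v‖ := by
    intro n
    induction n with
    | zero => simp [w]
    | succ n ih =>
      rw [hw, pow_succ']
      refine (hr1 _).trans ?_
      rw [mul_assoc]
      gcongr
  have hgeo : Summable fun n : ℕ => (1 / 2 : ℝ) ^ n * ‖v‖ :=
    (summable_geometric_of_lt_one (by norm_num) (by norm_num)).mul_right _
  have hsum : Summable fun n => r (w n) := by
    refine Summable.of_norm_bounded (hgeo.mul_left (2 * K)) fun n => (hr2 _).trans ?_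
    gcongr
    exact hwn n
  have hw0 : Filter.Tendsto w Filter.atTop (nhds 0) :=
    squeeze_zero_norm hwn hgeo.tendsto_atTop_zero
  have hpart : ∀ n, π (∑ k ∈ Finset.range n, r (w k)) = v - w n := by
    intro n
    induction n with
    | zero => simp [w]
    | succ n ih => rw [Finset.sum_range_succ, map_add, ih, hw]; abel
  refine ⟨∑' n, r (w n), ?_⟩
  have t1 := (π.continuous.tendsto _).comp hsum.hasSum.tendsto_sum_nat
  have t2 : Filter.Tendsto (fun n => v - w n) Filter.atTop (nhds (v - 0)) :=
    tendsto_const_nhds.sub hw0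
  rw [sub_zero] at t2
  refine tendsto_nhds_unique t1 (t2.congr fun n => (hpart n).symm)

/-! ### The Diestel–Faires theorem -/

section DiestelFaires

variable {X : Type*} [NormedAddCommGroup X] [NormedSpace ℝ X] [CompleteSpace X]

/-- A series all of whose subseries converge for `σ(X,Y)`, with `Y` total, is the image of the unit
vectors under a bounded operator from `ℓ∞`. The graph `{(u, x) : ∀ f ∈ Y, f x = ∑ uₙ f(yₙ)}` is
closed and its projection to `ℓ∞` is injective, and onto by Seever's theorem. -/
theorem exists_operator_of_subseries (Y : Submodule ℝ (X →L[ℝ] ℝ))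
    (hY : ∀ x : X, (∀ f ∈ Y, f x = 0) → x = 0) (y : ℕ → X)
    (h : ∀ J : Set ℕ, ∃ z : X, ∀ f ∈ Y, HasSum (J.indicator fun n => f (y n)) (f z)) :
    ∃ T : Linf →L[ℝ] X, ∀ k, T (Linf.ind {k}) = y k := by
  have habs : ∀ f : Y, Summable fun n => |(f : X →L[ℝ] ℝ) (y n)| := by
    intro f
    obtain ⟨z, hz⟩ := h Set.univ
    have := (hz f f.2).summable
    rw [Set.indicator_univ] at this
    exact this.abs
  have hbd : ∀ (f : Y) (u : Linf) (n : ℕ),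
      ‖u n * (f : X →L[ℝ] ℝ) (y n)‖ ≤ ‖u‖ * |(f : X →L[ℝ] ℝ) (y n)| := by
    intro f u n
    rw [Real.norm_eq_abs, abs_mul]
    gcongr
    exact Linf.abs_apply_le u n
  have hsum : ∀ (f : Y) (u : Linf), Summable fun n => u n * (f : X →L[ℝ] ℝ) (y n) :=
    fun f u => Summable.of_norm_bounded ((habs f).mul_left _) (hbd f u)
  let l : Y → Linf →L[ℝ] ℝ := fun f => LinearMap.mkContinuous
    { toFun := fun u => ∑' n, u n * (f : X →L[ℝ] ℝ) (y n)
      map_add' := by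
        intro u v
        rw [← (hsum f u).tsum_add (hsum f v)]
        congr 1
        ext n
        simp [add_mul]
      map_smul' := by
        intro c u
        rw [RingHom.id_apply, smul_eq_mul, ← tsum_mul_left]
        congr 1
        ext n
        simp [mul_assoc] } (∑' n, |(f : X →L[ℝ] ℝ) (y n)|) (by
    intro u
    refine (tsum_of_norm_bounded ((habs f).mul_left ‖u‖).hasSum (hbd f u)).trans ?_
    rw [tsum_mul_left, mul_comm])
  have hl : ∀ f u, l f u = ∑' n, u n * (f : X →L[ℝ] ℝ) (y n) := fun f u => rfl
  let G : Submodule ℝ (Linf × X) := ⨅ f : Y,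
    ((l f).comp (ContinuousLinearMap.fst ℝ Linf X)
      - (f : X →L[ℝ] ℝ).comp (ContinuousLinearMap.snd ℝ Linf X)).ker
  have hG : ∀ p : Linf × X, p ∈ G ↔ ∀ f : Y, l f p.1 = (f : X →L[ℝ] ℝ) p.2 := by
    intro p
    simp only [G, Submodule.mem_iInf, LinearMap.mem_ker]
    refine forall_congr' fun f => ?_
    exact sub_eq_zero
  have hGc : IsClosed (G : Set (Linf × X)) := by
    simp only [G, Submodule.coe_iInf]
    exact isClosed_iInter fun f => ContinuousLinearMap.isClosed_ker _
  have : CompleteSpace G := hGc.completeSpace_coe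
  let π : G →L[ℝ] Linf := (ContinuousLinearMap.fst ℝ Linf X).comp G.subtypeL
  have hπi : Function.Injective π := by
    rw [injective_iff_map_eq_zero]
    intro p hp
    have hp1 : (p : Linf × X).1 = 0 := hp
    have hp2 : (p : Linf × X).2 = 0 := by
      apply hY
      intro f hf
      have := (hG p).1 p.2 ⟨f, hf⟩
      rw [hp1, map_zero] at this
      exact this.symm
    exact Subtype.ext (Prod.ext hp1 hp2)
  have hπs : Function.Surjective π := by
    apply surjective_of_ind_mem_range
    intro J
    obtain ⟨z, hz⟩ := h J
    refine ⟨⟨(Linf.ind J, z), (hG _).2 fun f => ?_⟩, rfl⟩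
    rw [hl, ← (hz f f.2).tsum_eq]
    congr 1
    ext n
    by_cases hn : n ∈ J <;> simp [Linf.ind_apply, hn]
  let e := ContinuousLinearEquiv.ofBijective π (LinearMap.ker_eq_bot.2 hπi)
    (LinearMap.range_eq_top.2 hπs)
  refine ⟨((ContinuousLinearMap.snd ℝ Linf X).comp G.subtypeL).comp
    (e.symm : Linf →L[ℝ] G), fun k => ?_⟩
  have hk : ((Linf.ind {k}, y k) : Linf × X) ∈ G := by
    rw [hG]
    intro f
    rw [hl, tsum_eq_single k]
    · simp [Linf.ind_apply]
    · intro n hn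
      simp [Linf.ind_apply, hn]
  have hek : e.symm (Linf.ind {k}) = ⟨_, hk⟩ := by
    rw [ContinuousLinearEquiv.symm_apply_eq]
    rfl
  simp only [ContinuousLinearMap.comp_apply, ContinuousLinearEquiv.coe_coe, hek]
  rfl

/-- Grouping the terms of a subseries into disjoint finite blocks. -/
theorem hasSum_blocks (g : ℕ → ℝ) (t : ℕ → Finset ℕ) (ht : ∀ k l, k ≠ l → Disjoint (t k) (t l))
    (J : Set ℕ) (a : ℝ)
    (h : HasSum ((⋃ k ∈ J, (t k : Set ℕ)).indicator g) a) :
    HasSum (J.indicator fun k => ∑ i ∈ t k, g i) a := by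
  have hmem : ∀ k, ∀ i ∈ t k, (i ∈ ⋃ k ∈ J, (t k : Set ℕ)) ↔ k ∈ J := by
    intro k i hi
    simp only [Set.mem_iUnion, Finset.mem_coe, exists_prop]
    constructor
    · rintro ⟨l, hl, hil⟩
      by_contra hk
      exact Finset.disjoint_left.1 (ht k l fun e => hk (e ▸ hl)) hi hil
    · intro hk
      exact ⟨k, hk, hi⟩
  let r : (Σ k : ℕ, t k) → ℕ := fun p => p.2
  have hr : Function.Injective r := by
    rintro ⟨k, i, hi⟩ ⟨l, j, hj⟩ hij
    change i = j at hij
    subst hij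
    have : k = l := by
      by_contra hkl
      exact Finset.disjoint_left.1 (ht k l hkl) hi hj
    subst this
    rfl
  rw [← hr.hasSum_iff] at h
  · have h2 := h.sigma fun k => hasSum_fintype _
    convert h2 using 1
    ext k
    by_cases hk : k ∈ J
    · rw [Set.indicator_of_mem hk, ← Finset.sum_coe_sort (t k)]
      refine Finset.sum_congr rfl fun i _ => ?_
      exact (Set.indicator_of_mem ((hmem k i i.2).2 hk) g).symm
    · rw [Set.indicator_of_notMem hk]
      refine (Finset.sum_eq_zero fun i _ => ?_).symm
      exact Set.indicator_of_notMem (fun hi => hk ((hmem k i i.2).1 hi)) g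
  · intro i hi
    apply Set.indicator_of_notMem
    intro hi'
    simp only [Set.mem_iUnion, Finset.mem_coe, exists_prop] at hi'
    obtain ⟨k, -, hk⟩ := hi'
    exact hi ⟨⟨k, i, hk⟩, rfl⟩

/-- The Diestel–Faires theorem for series: if `X` contains no copy of `ℓ∞` and `Y` is total, a series
all of whose subseries converge for `σ(X,Y)` is unconditionally norm convergent. -/
theorem summable_of_subseries (hX : ¬ ContainsIsoCopyOfLinfty X) (Y : Submodule ℝ (X →L[ℝ] ℝ))
    (hY : ∀ x : X, (∀ f ∈ Y, f x = 0) → x = 0) (x : ℕ → X)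
    (h : ∀ J : Set ℕ, ∃ z : X, ∀ f ∈ Y, HasSum (J.indicator fun n => f (x n)) (f z)) :
    Summable x := by
  by_contra hns
  rw [summable_iff_vanishing_norm] at hns
  push Not at hns
  obtain ⟨ε, hε, hns⟩ := hns
  obtain ⟨t, ht1, ht2⟩ := exists_seq_of_forall_finset_exists
    (fun t : Finset ℕ => ε ≤ ‖∑ i ∈ t, x i‖) (fun s t => Disjoint s t) (by
      intro S _
      obtain ⟨t, ht1, ht2⟩ := hns (S.sup id)
      exact ⟨t, ht2, fun s hs => (ht1.mono_right (Finset.le_sup (f := id) hs)).symm⟩)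
  have ht : ∀ k l, k ≠ l → Disjoint (t k) (t l) := by
    intro k l hkl
    rcases lt_or_gt_of_ne hkl with h | h
    · exact ht2 k l h
    · exact (ht2 l k h).symm
  obtain ⟨T, hT⟩ := exists_operator_of_subseries Y hY (fun k => ∑ i ∈ t k, x i) (by
    intro J
    obtain ⟨z, hz⟩ := h (⋃ k ∈ J, (t k : Set ℕ))
    refine ⟨z, fun f hf => ?_⟩
    simp only [map_sum]
    exact hasSum_blocks _ t ht J _ (hz f hf))
  exact hX (containsIsoCopyOfLinfty_of_norm_ge T ε hε fun n => by rw [hT]; exact ht1 n)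

end DiestelFaires

/-! ### Support functions and sums of selections -/

section Support

theorem pi_functional_eq_sum {ι : Type*} (φ : (ι → ℝ) →L[ℝ] ℝ) :
    ∃ (I : Finset ι) (c : ι → ℝ), ∀ p, φ p = ∑ i ∈ I, c i * p i := by
  classical
  have hop : IsOpen {p : ι → ℝ | |φ p| < 1} := isOpen_lt (by fun_prop) continuous_const
  obtain ⟨I, u, hu, hsub⟩ := isOpen_pi_iff.1 hop 0 (by simp)
  have hvan : ∀ p : ι → ℝ, (∀ i ∈ I, p i = 0) → φ p = 0 := by
    intro p hp
    by_contra h0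
    have h1 : (φ p)⁻¹ • p ∈ {p : ι → ℝ | |φ p| < 1} := by
      apply hsub
      intro i hi
      have : ((φ p)⁻¹ • p) i = 0 := by simp [hp i hi]
      rw [this]
      exact (hu i hi).2
    simp [h0] at h1
  refine ⟨I, fun i => φ (Pi.single i 1), fun p => ?_⟩
  have h1 := hvan (p - ∑ i ∈ I, p i • Pi.single i (1 : ℝ)) (by
    intro j hj
    simp [Finset.sum_apply, Pi.single_apply, hj])
  rw [map_sub, map_sum, sub_eq_zero] at h1
  rw [h1]
  refine Finset.sum_congr rfl fun i _ => ?_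
  rw [map_smul, smul_eq_mul, mul_comm]

variable {X : Type*} [NormedAddCommGroup X] [NormedSpace ℝ X]

theorem le_supportFn (f : X →L[ℝ] ℝ) {C : Set X} (hC : Bornology.IsBounded C) {x : X}
    (hx : x ∈ C) : f x ≤ supportFn f C :=
  le_csSup (f.lipschitz.isBounded_image hC).bddAbove ⟨x, hx, rfl⟩

theorem neg_supportFn_neg_le (f : X →L[ℝ] ℝ) {C : Set X} (hC : Bornology.IsBounded C) {x : X}
    (hx : x ∈ C) : -supportFn (-f) C ≤ f x := by
  have := le_supportFn (-f) hC hx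
  rw [neg_apply] at this
  linarith

theorem abs_le_supportFn (f : X →L[ℝ] ℝ) {C : Set X} (hC : Bornology.IsBounded C) {x : X}
    (hx : x ∈ C) : |f x| ≤ |supportFn f C| + |supportFn (-f) C| := by
  have h1 := le_supportFn f hC hx
  have h2 := neg_supportFn_neg_le f hC hx
  have h3 := le_abs_self (supportFn f C)
  have h4 := le_abs_self (supportFn (-f) C)
  have h5 := abs_nonneg (supportFn f C)
  have h6 := abs_nonneg (supportFn (-f) C)
  rw [abs_le]
  constructor <;> linarith

/-- The evaluation map `X → ℝ^Y`, which induces `σ(X,Y)`. -/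
def evalMap (Y : Submodule ℝ (X →L[ℝ] ℝ)) : X →ₗ[ℝ] (Y → ℝ) where
  toFun x f := (f : X →L[ℝ] ℝ) x
  map_add' x y := by ext f; simp
  map_smul' c x := by ext f; simp

theorem isCompact_evalMap_image (Y : Submodule ℝ (X →L[ℝ] ℝ)) {C : Set X}
    (hC : @IsCompact X (sigmaTop (Y : Set (X →L[ℝ] ℝ))) C) : IsCompact (evalMap Y '' C) := by
  exact @IsCompact.image X (Y → ℝ) (sigmaTop (Y : Set (X →L[ℝ] ℝ))) _ C
    (fun x => fun f : Y => (f : X →L[ℝ] ℝ) x) hC (by exact continuous_induced_dom)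

/-- On sums of evaluations, a continuous functional on `ℝ^Y` acts as an element of `Y`. -/
theorem exists_repr (Y : Submodule ℝ (X →L[ℝ] ℝ)) (φ : (Y → ℝ) →L[ℝ] ℝ) :
    ∃ g ∈ Y, (∀ x, φ (evalMap Y x) = g x) ∧ ∀ (x : ℕ → X) (p : Y → ℝ),
      (∀ f : Y, HasSum (fun n => (f : X →L[ℝ] ℝ) (x n)) (p f)) →
        HasSum (fun n => g (x n)) (φ p) := by
  obtain ⟨I, c, hφ⟩ := pi_functional_eq_sum φ
  have hg : ∀ x, (∑ i ∈ I, c i • (i : X →L[ℝ] ℝ)) x = ∑ i ∈ I, c i * (i : X →L[ℝ] ℝ) x := by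
    intro x
    simp
  refine ⟨∑ i ∈ I, c i • (i : X →L[ℝ] ℝ),
    Submodule.sum_mem _ fun i _ => Y.smul_mem _ i.2, fun x => ?_, fun x p hp => ?_⟩
  · rw [hφ, hg]
    rfl
  · simp only [hg, hφ]
    exact hasSum_sum fun i _ => (hp i).mul_left _

variable (Y : Submodule ℝ (X →L[ℝ] ℝ)) (C : ℕ → Set X) (D : Set X)

/-- By Hahn–Banach separation in `ℝ^Y`, the `σ(X,Y)`-sum of a selection lies in the set whose
support function is the sum of the support functions. -/
theorem selection_sum_mem (hCb : ∀ n, Bornology.IsBounded (C n))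
    (hDne : D.Nonempty) (hDconv : Convex ℝ D)
    (hDcpt : @IsCompact X (sigmaTop (Y : Set (X →L[ℝ] ℝ))) D)
    (hs : ∀ f ∈ Y, HasSum (fun n => supportFn f (C n)) (supportFn f D))
    (x : ℕ → X) (hx : ∀ n, x n ∈ C n) :
    ∃ z ∈ D, ∀ f ∈ Y, HasSum (fun n => f (x n)) (f z) := by
  have hsum : ∀ f : Y, Summable fun n => (f : X →L[ℝ] ℝ) (x n) := fun f =>
    Summable.of_norm_bounded
      ((hs f f.2).summable.abs.add (hs (-f) (Y.neg_mem f.2)).summable.abs)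
      fun n => abs_le_supportFn _ (hCb n) (hx n)
  let p : Y → ℝ := fun f => ∑' n, (f : X →L[ℝ] ℝ) (x n)
  have hp : ∀ f : Y, HasSum (fun n => (f : X →L[ℝ] ℝ) (x n)) (p f) := fun f => (hsum f).hasSum
  have hpD : p ∈ evalMap Y '' D := by
    by_contra hpD
    obtain ⟨φ, t, h1, h2⟩ := geometric_hahn_banach_closed_point (hDconv.linear_image (evalMap Y))
      (isCompact_evalMap_image Y hDcpt).isClosed hpD
    obtain ⟨g, hgY, hg1, hg2⟩ := exists_repr Y φ
    have h3 := hasSum_le (fun n => le_supportFn g (hCb n) (hx n)) (hg2 x p hp) (hs g hgY)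
    have h4 : supportFn g D ≤ t := by
      refine csSup_le (hDne.image g) ?_
      rintro _ ⟨z, hz, rfl⟩
      rw [← hg1]
      exact (h1 _ ⟨z, hz, rfl⟩).le
    linarith
  obtain ⟨z, hz, hzp⟩ := hpD
  refine ⟨z, hz, fun f hf => ?_⟩
  have : f z = p ⟨f, hf⟩ := by rw [← hzp]; rfl
  rw [this]
  exact hp ⟨f, hf⟩

/-- Conversely every point of `D` is the `σ(X,Y)`-sum of a selection: the set of such sums is
convex, compact by Tychonoff's theorem, and has the support function of `D`. -/
theorem exists_selection_sum_eq (hCne : ∀ n, (C n).Nonempty)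
    (hCb : ∀ n, Bornology.IsBounded (C n)) (hCconv : ∀ n, Convex ℝ (C n))
    (hCcpt : ∀ n, @IsCompact X (sigmaTop (Y : Set (X →L[ℝ] ℝ))) (C n))
    (hDb : Bornology.IsBounded D)
    (hs : ∀ f ∈ Y, HasSum (fun n => supportFn f (C n)) (supportFn f D))
    (z : X) (hz : z ∈ D) :
    ∃ x : ℕ → X, (∀ n, x n ∈ C n) ∧ ∀ f ∈ Y, HasSum (fun n => f (x n)) (f z) := by
  have hbsum : ∀ f : Y, Summable fun n =>
      |supportFn (f : X →L[ℝ] ℝ) (C n)| + |supportFn (-(f : X →L[ℝ] ℝ)) (C n)| := fun f =>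
    (hs f f.2).summable.abs.add (hs (-f) (Y.neg_mem f.2)).summable.abs
  let K : Set (Y → ℝ) := {p | ∃ x : ℕ → X, (∀ n, x n ∈ C n) ∧
    ∀ f : Y, HasSum (fun n => (f : X →L[ℝ] ℝ) (x n)) (p f)}
  let Φ : (ℕ → Y → ℝ) → Y → ℝ := fun q f => ∑' n, q n f
  have hK : K = Φ '' Set.univ.pi fun n => evalMap Y '' C n := by
    ext p
    constructor
    · rintro ⟨x, hx, hp⟩
      refine ⟨fun n => evalMap Y (x n), fun n _ => ⟨x n, hx n, rfl⟩, ?_⟩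
      ext f
      exact (hp f).tsum_eq
    · rintro ⟨q, hq, rfl⟩
      choose x hx hxq using fun n => hq n (Set.mem_univ n)
      refine ⟨x, hx, fun f => ?_⟩
      have e : ∀ n, q n f = (f : X →L[ℝ] ℝ) (x n) := fun n => by rw [← hxq n]; rfl
      simp only [Φ, e]
      exact (Summable.of_norm_bounded (hbsum f) fun n => abs_le_supportFn _ (hCb n) (hx n)).hasSum
  have hKcpt : IsCompact K := by
    rw [hK]
    refine (isCompact_univ_pi fun n => isCompact_evalMap_image Y (hCcpt n)).image_of_continuousOn ?_
    refine continuousOn_pi.2 fun f => continuousOn_tsum (fun n => ?_) (hbsum f) ?_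
    · exact ((continuous_apply f).comp (continuous_apply n)).continuousOn
    · intro n q hq
      obtain ⟨x, hx, hxq⟩ := hq n (Set.mem_univ n)
      rw [← hxq]
      exact abs_le_supportFn _ (hCb n) hx
  have hKconv : Convex ℝ K := by
    rintro p ⟨x, hx, hp⟩ p' ⟨x', hx', hp'⟩ a b ha hb hab
    refine ⟨fun n => a • x n + b • x' n, fun n => hCconv n (hx n) (hx' n) ha hb hab, fun f => ?_⟩
    simp only [map_add, map_smul, smul_eq_mul, Pi.add_apply, Pi.smul_apply]
    exact ((hp f).mul_left a).add ((hp' f).mul_left b)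
  have hzK : evalMap Y z ∈ K := by
    by_contra hzK
    obtain ⟨φ, t, h1, h2⟩ := geometric_hahn_banach_closed_point hKconv hKcpt.isClosed hzK
    obtain ⟨g, hgY, hg1, hg2⟩ := exists_repr Y φ
    -- `g` attains its supremum on each `C n`.
    have hatt : ∀ n, ∃ x ∈ C n, g x = supportFn g (C n) := by
      intro n
      have hc : IsCompact (g '' C n) := by
        have := (isCompact_evalMap_image Y (hCcpt n)).image (continuous_apply (⟨g, hgY⟩ : Y))
        rwa [Set.image_image] at this
      exact hc.sSup_mem ((hCne n).image g)
    choose x hx hxg using hatt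
    have hsum : ∀ f : Y, Summable fun n => (f : X →L[ℝ] ℝ) (x n) := fun f =>
      Summable.of_norm_bounded (hbsum f) fun n => abs_le_supportFn _ (hCb n) (hx n)
    have h3 := h1 (fun f => ∑' n, (f : X →L[ℝ] ℝ) (x n)) ⟨x, hx, fun f => (hsum f).hasSum⟩
    have h4 := hg2 x (fun f => ∑' n, (f : X →L[ℝ] ℝ) (x n)) fun f => (hsum f).hasSum
    simp only [hxg] at h4
    have h5 := h4.unique (hs g hgY)
    have h6 := le_supportFn g hDb hz
    rw [hg1] at h2
    linarith
  obtain ⟨x, hx, hxz⟩ := hzK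
  exact ⟨x, hx, fun f hf => hxz ⟨f, hf⟩⟩

end Support

/-! ### The multimeasure -/

/-- Let `X` be a Banach space containing no subspace isomorphic to
`ℓ∞` and `M : Σ → b(X)` a set-valued map. If there is a total linear subspace `Y ⊆ X*`
such that every `M(A)` is convex and `σ(X,Y)`-compact and `s(x*, M)` is countably
additive for every `x* ∈ Y`, then `M` is a strong multimeasure. -/
theorem statement6 {Ω X : Type*} [MeasurableSpace Ω]
    [NormedAddCommGroup X] [NormedSpace ℝ X] [CompleteSpace X]
    (hX : ¬ ContainsIsoCopyOfLinfty X)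
    (M : Set Ω → Set X)
    (hne : ∀ A : Set Ω, MeasurableSet A → (M A).Nonempty)
    (hbd : ∀ A : Set Ω, MeasurableSet A → Bornology.IsBounded (M A))
    (Y : Submodule ℝ (X →L[ℝ] ℝ))
    (hYtotal : ∀ x : X, (∀ f ∈ Y, f x = 0) → x = 0)
    (hconv : ∀ A : Set Ω, MeasurableSet A → Convex ℝ (M A))
    (hcpt : ∀ A : Set Ω, MeasurableSet A → @IsCompact X (sigmaTop (Y : Set (X →L[ℝ] ℝ))) (M A))
    (hca : ∀ f ∈ Y, CountablyAdditive (fun A => supportFn f (M A))) :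
    IsStrongMultimeasure M := by
  classical
  -- Countable additivity along the constant sequence `∅` forces `s(f, M ∅) = 0` for `f ∈ Y`.
  have hempty : ∀ v ∈ M ∅, ∀ f ∈ Y, f v = 0 := by
    intro v hv f hf
    have hz : ∀ g ∈ Y, supportFn g (M ∅) = 0 := by
      intro g hg
      have h1 := (hca g hg (fun _ => ∅) (fun _ => MeasurableSet.empty)
        (fun _ _ _ => Set.disjoint_empty _)).summable
      exact (summable_const_iff _).1 h1
    have h1 := le_supportFn f (hbd ∅ MeasurableSet.empty) hv
    have h2 := neg_supportFn_neg_le f (hbd ∅ MeasurableSet.empty) hv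
    rw [hz f hf] at h1
    rw [hz (-f) (Y.neg_mem hf)] at h2
    linarith
  obtain ⟨v, hv⟩ := hne ∅ MeasurableSet.empty
  intro A hA hdisj
  have hAU : MeasurableSet (⋃ n, A n) := MeasurableSet.iUnion hA
  have hsel : UncondConvSeriesOfSets (fun n => M (A n)) := by
    intro x hx
    refine summable_of_subseries hX Y hYtotal x fun J => ?_
    -- The subseries over `J` is a selection for the sets `A n` with `n ∉ J` replaced by `∅`.
    let A' : ℕ → Set Ω := fun n => if n ∈ J then A n else ∅
    have hA' : ∀ n, MeasurableSet (A' n) := by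
      intro n
      by_cases hn : n ∈ J <;> simp [A', hn, hA]
    have hdisj' : Pairwise (Function.onFun Disjoint A') := by
      intro i j hij
      by_cases hi : i ∈ J <;> by_cases hj : j ∈ J <;> simp [A', Function.onFun, hi, hj]
      exact hdisj hij
    have hAU' := MeasurableSet.iUnion hA'
    obtain ⟨z, -, hz⟩ := selection_sum_mem Y (fun n => M (A' n)) (M (⋃ n, A' n))
      (fun n => hbd _ (hA' n)) (hne _ hAU') (hconv _ hAU') (hcpt _ hAU')
      (fun f hf => hca f hf A' hA' hdisj') (fun n => if n ∈ J then x n else v) (by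
        intro n
        by_cases hn : n ∈ J
        · simpa [A', hn] using hx n
        · simpa [A', hn] using hv)
    refine ⟨z, fun f hf => ?_⟩
    convert hz f hf using 1
    ext n
    by_cases hn : n ∈ J <;> simp [hn, hempty v hv f hf]
  have hca' := fun f hf => hca f hf A hA hdisj
  have hY2 : ∀ a b : X, (∀ f ∈ Y, f a = f b) → a = b := fun a b hab =>
    sub_eq_zero.1 (hYtotal _ fun f hf => by rw [map_sub, hab f hf, sub_self])
  refine ⟨hsel, congrArg closure (Set.Subset.antisymm ?_ ?_)⟩
  · intro z hz
    obtain ⟨x, hx, hxz⟩ := exists_selection_sum_eq Y (fun n => M (A n)) (M (⋃ n, A n))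
      (fun n => hne _ (hA n)) (fun n => hbd _ (hA n)) (fun n => hconv _ (hA n))
      (fun n => hcpt _ (hA n)) (hbd _ hAU) hca' z hz
    have hs := (hsel x hx).hasSum
    have : ∑' n, x n = z := hY2 _ _ fun f hf => (hs.mapL f).unique (hxz f hf)
    exact ⟨x, hx, this ▸ hs⟩
  · rintro s ⟨x, hx, hxs⟩
    obtain ⟨z, hz, hxz⟩ := selection_sum_mem Y (fun n => M (A n)) (M (⋃ n, A n))
      (fun n => hbd _ (hA n)) (hne _ hAU) (hconv _ hAU) (hcpt _ hAU) hca' x hx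
    rw [hY2 s z fun f hf => (hxs.mapL f).unique (hxz f hf)]
    exact hz
end

section
/- Let X be a real Banach space and let Y ⊆ X* be a linear subspace having the Orlicz-Thomas property. Let M : Σ → cwk(X) be a set-valued map defined on a σ-algebra Σ, taking values in the family of convex weakly compact non-empty subsets of X, such that the support map s(x*,M) is countably additive for every x* ∈ Y. Then M is a strong multimeasure. -/
/-- The weak topology on `X`: the topology of pointwise convergence on `X*`. -/
def weakTop (X : Type*) [NormedAddCommGroup X] [NormedSpace ℝ X] : TopologicalSpace X :=
  TopologicalSpace.induced (fun x => fun f : X →L[ℝ] ℝ => f x) Pi.topologicalSpace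

/-- A set `W ⊆ X*` has the Orlicz–Thomas property. -/
def HasOrliczThomas {X : Type*} [NormedAddCommGroup X] [NormedSpace ℝ X]
    (W : Set (X →L[ℝ] ℝ)) : Prop :=
  ∀ (Ω : Type) (_ : MeasurableSpace Ω) (ν : Set Ω → X),
    (∀ f ∈ W, CountablyAdditive (fun A => f (ν A))) → CountablyAdditive ν

/-- A point which no element of `F` separates from a convex, `σ(E, F)`-compact set belongs to that
set. -/
theorem mem_of_forall_le_weakBilin {E F : Type*} [AddCommGroup E] [Module ℝ E] [AddCommGroup F]
    [Module ℝ F] (B : E →ₗ[ℝ] F →ₗ[ℝ] ℝ) (hB : Function.Injective B) {K : Set E}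
    (hconv : Convex ℝ K) (hK : IsCompact ((fun (x : E) (f : F) => B x f) '' K)) (φ : E)
    (h : ∀ f : F, ∃ k ∈ K, B φ f ≤ B k f) : φ ∈ K := by
  have hemb := WeakBilin.isEmbedding (B := B) hB
  have : T2Space (WeakBilin B) := hemb.t2Space
  have hK' : IsCompact (X := WeakBilin B) K := hemb.isCompact_iff.2 hK
  by_contra hφ
  obtain ⟨L, c, hLK, hLφ⟩ :=
    geometric_hahn_banach_closed_point (E := WeakBilin B) hconv hK'.isClosed hφ
  obtain ⟨f, rfl⟩ := LinearMap.dualEmbedding_surjective B L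
  obtain ⟨k, hk, hfk⟩ := h f
  have h1 : B k f < c := hLK k hk
  have h2 : c < B φ f := hLφ
  linarith

/-- A linear functional `φ` on `Y` which is dominated by the support function of a convex,
`σ(X, Y)`-compact set `K` is evaluation at a point of `K`. -/
theorem exists_mem_of_le_support {X : Type*} [NormedAddCommGroup X] [NormedSpace ℝ X]
    (Y : Submodule ℝ (X →L[ℝ] ℝ)) {K : Set X} (hconv : Convex ℝ K)
    (hK : IsCompact ((fun (x : X) (f : Y) => f.1 x) '' K))
    (φ : Module.Dual ℝ Y) (h : ∀ f : Y, ∃ k ∈ K, φ f ≤ f.1 k) :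
    ∃ u ∈ K, ∀ f : Y, f.1 u = φ f := by
  let T : X →ₗ[ℝ] Module.Dual ℝ Y :=
    { toFun := fun x =>
        { toFun := fun f => f.1 x
          map_add' := fun f g => rfl
          map_smul' := fun c f => rfl }
      map_add' := fun x y => LinearMap.ext fun f => map_add f.1 x y
      map_smul' := fun c x => LinearMap.ext fun f => map_smul f.1 c x }
  obtain ⟨u, hu, huφ⟩ : φ ∈ T '' K := by
    refine mem_of_forall_le_weakBilin (F := Y) (LinearMap.id : Module.Dual ℝ Y →ₗ[ℝ] Y →ₗ[ℝ] ℝ)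
      (fun _ _ hab => hab) (hconv.linear_image T) ?_ φ fun f => ?_
    · rw [Set.image_image]
      exact hK
    · obtain ⟨k, hk, hfk⟩ := h f
      exact ⟨T k, ⟨k, hk, rfl⟩, hfk⟩
  exact ⟨u, hu, fun f => LinearMap.congr_fun huφ f⟩

/-- A weakly compact set is `σ(X, Y)`-compact. -/
theorem isCompact_eval_image {X : Type*} [NormedAddCommGroup X] [NormedSpace ℝ X]
    (Y : Submodule ℝ (X →L[ℝ] ℝ)) {K : Set X} (hK : @IsCompact X (weakTop X) K) :
    IsCompact ((fun (x : X) (f : Y) => f.1 x) '' K) := by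
  refine @IsCompact.image X _ (weakTop X) _ _ _ hK ?_
  refine @continuous_pi _ _ _ (weakTop X) _ _ fun f => ?_
  exact @Continuous.comp _ _ _ (weakTop X) _ _ (fun x => fun f : X →L[ℝ] ℝ => f x) _
      (continuous_apply f.1) continuous_induced_dom

theorem supportFn_spec {X : Type*} [NormedAddCommGroup X] [NormedSpace ℝ X]
    (f : X →L[ℝ] ℝ) {K : Set X} (hne : K.Nonempty) (hK : @IsCompact X (weakTop X) K) :
    (∀ x ∈ K, f x ≤ supportFn f K) ∧ ∃ k ∈ K, f k = supportFn f K := by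
  have hc : IsCompact (f '' K) := by
    refine @IsCompact.image X _ (weakTop X) _ _ _ hK ?_
    exact @Continuous.comp _ _ _ (weakTop X) _ _ (fun x => fun f : X →L[ℝ] ℝ => f x) _
      (continuous_apply f) continuous_induced_dom
  exact ⟨fun x hx => le_csSup hc.bddAbove ⟨x, hx, rfl⟩, hc.sSup_mem (hne.image f)⟩

/-- Testing the Orlicz–Thomas property on a constant set function shows that `W` separates
the points of `X`. -/
theorem HasOrliczThomas.eq_zero {X : Type*} [NormedAddCommGroup X] [NormedSpace ℝ X]
    {W : Set (X →L[ℝ] ℝ)} (h : HasOrliczThomas W) {x : X} (hx : ∀ f ∈ W, f x = 0) : x = 0 := by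
  have := h Unit ⊤ (fun _ => x) (fun f hf A _ _ => by simp [hx f hf, hasSum_zero])
    (fun _ => ∅) (fun _ => MeasurableSet.empty) (fun i j _ => by simp [Function.onFun])
  exact (summable_const_iff _).1 this.summable

/-- An absolutely convergent series defines a countably additive set function on `𝒫(ℕ)`. -/
theorem hasSum_tsum_indicator_iUnion {g : ℕ → ℝ} (hg : Summable g) {B : ℕ → Set ℕ}
    (hB : Pairwise (Function.onFun Disjoint B)) :
    HasSum (fun k => ∑' n, (B k).indicator g n) (∑' n, (⋃ k, B k).indicator g n) := by
  have h1 : HasSum (fun p : (⋃ k, B k : Set ℕ) => g p) (∑' n, (⋃ k, B k).indicator g n) :=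
    hasSum_subtype_iff_indicator.2 (hg.indicator _).hasSum
  rw [← (Set.unionEqSigmaOfDisjoint hB).symm.hasSum_iff] at h1
  refine h1.sigma fun k => ?_
  have h2 : HasSum (fun p : B k => g p) (∑' n, (B k).indicator g n) :=
    hasSum_subtype_iff_indicator.2 (hg.indicator _).hasSum
  convert h2 using 2 with p
  simp

/-- Let `X` be a Banach space and `Y ⊆ X*` a linear subspace with the
Orlicz–Thomas property. If `M : Σ → cwk(X)` takes convex, weakly compact, non-empty
values and `s(x*, M)` is countably additive for every `x* ∈ Y`, then `M` is a strong
multimeasure. -/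
theorem statement8 {Ω X : Type*} [MeasurableSpace Ω]
    [NormedAddCommGroup X] [NormedSpace ℝ X] [CompleteSpace X]
    (Y : Submodule ℝ (X →L[ℝ] ℝ))
    (hOT : HasOrliczThomas (Y : Set (X →L[ℝ] ℝ)))
    (M : Set Ω → Set X)
    (hne : ∀ A : Set Ω, MeasurableSet A → (M A).Nonempty)
    (hconv : ∀ A : Set Ω, MeasurableSet A → Convex ℝ (M A))
    (hcpt : ∀ A : Set Ω, MeasurableSet A → @IsCompact X (weakTop X) (M A))
    (hca : ∀ f ∈ Y, CountablyAdditive (fun A => supportFn f (M A))) :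
    IsStrongMultimeasure M := by
  have hsep := fun x hx => HasOrliczThomas.eq_zero hOT (x := x) hx
  intro A hA hdisj
  have hU : ∀ S : Set ℕ, MeasurableSet (⋃ n ∈ S, A n) :=
    fun S => MeasurableSet.biUnion S.to_countable fun n _ => hA n
  have hspec : ∀ (f : X →L[ℝ] ℝ) (B : Set Ω), MeasurableSet B → _ :=
    fun f B hB => supportFn_spec f (hne B hB) (hcpt B hB)
  have hempty : ∀ f ∈ Y, supportFn f (M ∅) = 0 := fun f hf =>
    (summable_const_iff _).1 (hca f hf (fun _ => ∅) (fun _ => MeasurableSet.empty)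
      (fun i j _ => by simp [Function.onFun])).summable
  -- Replacing the sets `A n`, `n ∉ S`, by `∅` turns sums over `S` into sums over `ℕ`.
  have hsub : ∀ f ∈ Y, ∀ S : Set ℕ, HasSum (S.indicator fun n => supportFn f (M (A n)))
      (supportFn f (M (⋃ n ∈ S, A n))) := by
    intro f hf S
    classical
    have h := hca f hf (fun n => ⋃ _ : n ∈ S, A n) (fun n => MeasurableSet.iUnion fun _ => hA n) (by
      intro i j hij
      refine (hdisj hij).mono ?_ ?_ <;> exact Set.iUnion_subset fun _ => subset_rfl)
    convert h using 1
    ext n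
    by_cases hn : n ∈ S <;> simp [hn, hempty f hf]
  have hsum : ∀ f ∈ Y, Summable fun n => supportFn f (M (A n)) := fun f hf =>
    (hca f hf A hA hdisj).summable
  have hbd : ∀ f : X →L[ℝ] ℝ, ∀ n, ∀ x ∈ M (A n),
      ‖f x‖ ≤ |supportFn f (M (A n))| + |supportFn (-f) (M (A n))| := by
    intro f n x hx
    have h1 := (hspec f _ (hA n)).1 x hx
    have h2 := (hspec (-f) _ (hA n)).1 x hx
    simp only [neg_apply] at h2
    rw [Real.norm_eq_abs, abs_le]
    constructor <;> linarith [le_abs_self (supportFn f (M (A n))),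
      le_abs_self (supportFn (-f) (M (A n))), abs_nonneg (supportFn f (M (A n))),
      abs_nonneg (supportFn (-f) (M (A n)))]
  have hbdsum : ∀ f ∈ Y, Summable fun n =>
      |supportFn f (M (A n))| + |supportFn (-f) (M (A n))| := fun f hf =>
    (hsum f hf).abs.add (hsum (-f) (Y.neg_mem hf)).abs
  have hfx : ∀ x : ℕ → X, (∀ n, x n ∈ M (A n)) → ∀ f ∈ Y, Summable fun n => f (x n) :=
    fun x hx f hf => Summable.of_norm_bounded (hbdsum f hf) fun n => hbd f n _ (hx n)
  have key : ∀ x : ℕ → X, (∀ n, x n ∈ M (A n)) → ∃ s ∈ M (⋃ n, A n), HasSum x s := by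
    intro x hx
    have hex : ∀ S : Set ℕ, ∃ u ∈ M (⋃ n ∈ S, A n), ∀ f : Y,
        f.1 u = ∑' n, S.indicator (fun n => f.1 (x n)) n := by
      intro S
      let φ : Module.Dual ℝ Y :=
        { toFun := fun f => ∑' n, S.indicator (fun n => f.1 (x n)) n
          map_add' := fun f g => by
            rw [← ((hfx x hx f f.2).indicator S).tsum_add ((hfx x hx g g.2).indicator S)]
            refine tsum_congr fun n => ?_
            by_cases hn : n ∈ S <;> simp [hn]
          map_smul' := fun c f => by
            rw [RingHom.id_apply, smul_eq_mul, ← tsum_mul_left]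
            refine tsum_congr fun n => ?_
            by_cases hn : n ∈ S <;> simp [hn] }
      refine exists_mem_of_le_support Y (hconv _ (hU S))
        (isCompact_eval_image Y (hcpt _ (hU S))) φ fun f => ?_
      obtain ⟨k, hk, hkf⟩ := (hspec f.1 _ (hU S)).2
      refine ⟨k, hk, ?_⟩
      rw [hkf, ← (hsub f.1 f.2 S).tsum_eq]
      refine ((hfx x hx f f.2).indicator S).tsum_le_tsum (fun n => ?_) (hsub f.1 f.2 S).summable
      exact Set.indicator_le_indicator ((hspec f.1 _ (hA n)).1 _ (hx n))
    choose ν hνM hν using hex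
    have hνca : CountablyAdditive ν := by
      refine hOT ℕ ⊤ ν fun f hf B _ hB => ?_
      simp only [hν _ ⟨f, hf⟩]
      exact hasSum_tsum_indicator_iUnion (hfx x hx f hf) hB
    have hνx : ∀ n, ν {n} = x n := by
      intro n
      refine sub_eq_zero.1 (hsep _ fun f hf => ?_)
      rw [map_sub, sub_eq_zero, hν {n} ⟨f, hf⟩, tsum_eq_single n]
      · simp
      · intro m hm
        simp [hm]
    refine ⟨ν Set.univ, by simpa using hνM Set.univ, ?_⟩
    have h := hνca (fun n => {n}) (fun n => trivial) (fun i j hij => by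
       simpa [Function.onFun] using hij)
    simpa [hνx, Set.iUnion_of_singleton] using h
  have hsubset : seriesSumSet (fun n => M (A n)) ⊆ M (⋃ n, A n) := by
    rintro s ⟨x, hx, hs⟩
    obtain ⟨t, ht, hxt⟩ := key x hx
    exact hs.unique hxt ▸ ht
  refine ⟨fun x hx => (key x hx).choose_spec.2.summable, ?_⟩
  congr 1
  refine Set.Subset.antisymm (fun u hu => ?_) hsubset
  have hSconv : Convex ℝ (seriesSumSet fun n => M (A n)) := by
    rintro s ⟨x, hx, hs⟩ t ⟨y, hy, ht⟩ a b ha hb hab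
    exact ⟨fun n => a • x n + b • y n, fun n => hconv _ (hA n) (hx n) (hy n) ha hb hab,
      (hs.const_smul a).add (ht.const_smul b)⟩
  have hScpt : IsCompact ((fun (x : X) (f : Y) => f.1 x) '' seriesSumSet fun n => M (A n)) := by
    have hP : IsCompact (Set.univ.pi fun n => (fun (x : X) (f : Y) => f.1 x) '' M (A n)) :=
      isCompact_univ_pi fun n => isCompact_eval_image Y (hcpt _ (hA n))
    have hcont : ContinuousOn (fun (g : ℕ → Y → ℝ) (f : Y) => ∑' n, g n f)
        (Set.univ.pi fun n => (fun (x : X) (f : Y) => f.1 x) '' M (A n)) := by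
      refine continuousOn_pi.2 fun f => ?_
      refine continuousOn_tsum (fun n => ?_) (hbdsum f.1 f.2) fun n g hg => ?_
      · exact ((continuous_apply f).comp (continuous_apply n)).continuousOn
      · obtain ⟨x, hx, hxg⟩ := hg n trivial
        rw [← hxg]
        exact hbd f.1 n x hx
    convert hP.image_of_continuousOn hcont using 1
    ext ψ
    constructor
    · rintro ⟨s, ⟨x, hx, hs⟩, rfl⟩
      refine ⟨fun n f => f.1 (x n), fun n _ => ⟨x n, hx n, rfl⟩, ?_⟩
      ext f
      exact (f.1.hasSum hs).tsum_eq
    · rintro ⟨g, hg, rfl⟩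
      choose x hx hxg using fun n => hg n trivial
      obtain ⟨s, -, hs⟩ := key x hx
      refine ⟨s, ⟨x, hx, hs⟩, ?_⟩
      ext f
      simp only [← hxg]
      exact (f.1.hasSum hs).tsum_eq.symm
  obtain ⟨v, hv, hvu⟩ := exists_mem_of_le_support Y hSconv hScpt
    { toFun := fun f => f.1 u, map_add' := fun f g => rfl, map_smul' := fun c f => rfl } (by
      intro f
      -- A selection maximizing `f` in every `M (A n)` attains the support function of the sum.
      choose k hk hkf using fun n => (hspec f.1 _ (hA n)).2
      obtain ⟨s, -, hs⟩ := key k hk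
      refine ⟨s, ⟨k, hk, hs⟩, ?_⟩
      have h1 : f.1 s = supportFn f.1 (M (⋃ n, A n)) := by
        have h2 := f.1.hasSum hs
        simp only [hkf] at h2
        exact h2.unique (hca f.1 f.2 A hA hdisj)
      rw [h1]
      exact (hspec f.1 _ (MeasurableSet.iUnion hA)).1 u hu)
  have : v = u := sub_eq_zero.1 (hsep _ fun f hf => by
    rw [map_sub, sub_eq_zero]
    exact hvu ⟨f, hf⟩)
  exact this ▸ hv
end
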